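/- arXiv:2007.00132 — 3 statements merged into one kernel-verified Lean document; each statement's English description precedes it below -/
import Mathlib

section
/- Let K ≥ 1 be an integer, P a real n×n̄ matrix, and for each k ≤ K let f_k ≥ 1 and S^{k1},…,S^{k n̄} be symmetric f_k×f_k matrices defining S_k[z] = ∑_i z_i S^{ki}, such that z = 0 whenever S_k[z] = 0 for all k; let 𝒯 ⊆ ℝ_{≥0}^K be a nonempty convex compact monotone set containing a point with all coordinates positive, and ρ > 0. Let p ∈ ℝ^n and q, γ ∈ ℝ. Then 2pᵀζ + q ≤ γ holds for every ζ ∈ 𝒳[ρ] if and only if there exist positive semidefinite matrices Λ_k ∈ S^{f_k} (k = 1,…,K) and α ∈ ℝ such that the block matrix [[α, −pᵀP],[−Pᵀp, ∑_k 𝒮_k^*[Λ_k]]] is positive semidefinite and α + ρ·φ_𝒯(λ[Λ]) + q ≤ γ. -/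
open Matrix BigOperators

noncomputable section

/-- The spectratope `𝒳[s]`: image under `z ↦ P z` of the set of `z` such that
`S_k[z]² ⪯ s t_k I` for some `t ∈ 𝒯`, where `S_k[z] = ∑ i z_i S^{ki}`. -/
def spectratope {n nb K : ℕ} (f : Fin K → ℕ) (P : Matrix (Fin n) (Fin nb) ℝ)
    (Smat : (k : Fin K) → Fin nb → Matrix (Fin (f k)) (Fin (f k)) ℝ)
    (T : Set (Fin K → ℝ)) (s : ℝ) : Set (Fin n → ℝ) :=
  {x | ∃ z : Fin nb → ℝ, ∃ t ∈ T, x = P *ᵥ z ∧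
    ∀ k, ((s * t k) • (1 : Matrix (Fin (f k)) (Fin (f k)) ℝ)
            - (∑ i, z i • Smat k i) ^ 2).PosSemidef}

/-- Support function `φ_𝒯(λ) = max_{t ∈ 𝒯} λᵀ t`. -/
def suppFn {K : ℕ} (T : Set (Fin K → ℝ)) (lam : Fin K → ℝ) : ℝ :=
  sSup ((fun t => ∑ k, lam k * t k) '' T)

/-- `𝒮_k^*[Λ]`, the matrix with entries `Tr(Λ (S^{ki} S^{kj} + S^{kj} S^{ki})/2)`. -/
def calSstar {nb fk : ℕ} (Sm : Fin nb → Matrix (Fin fk) (Fin fk) ℝ)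
    (Λ : Matrix (Fin fk) (Fin fk) ℝ) : Matrix (Fin nb) (Fin nb) ℝ :=
  Matrix.of fun i j => (Λ * ((1 / 2 : ℝ) • (Sm i * Sm j + Sm j * Sm i))).trace

/-- `λ[Λ] = (Tr Λ_1, …, Tr Λ_K)`. -/
def lamOf {K : ℕ} {f : Fin K → ℕ}
    (Λ : (k : Fin K) → Matrix (Fin (f k)) (Fin (f k)) ℝ) : Fin K → ℝ :=
  fun k => (Λ k).trace

/-- `Q_+ = [[Q, q],[qᵀ, 0]]`. -/
def qPlus {m : ℕ} (Q : Matrix (Fin m) (Fin m) ℝ) (q : Fin m → ℝ) :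
    Matrix (Fin m ⊕ Unit) (Fin m ⊕ Unit) ℝ :=
  Matrix.fromBlocks Q (Matrix.of fun i _ => q i) (Matrix.of fun _ j => q j) 0

/-- `BlockDiag(M, μ)`. -/
def blockDiagOne {m : ℕ} (M : Matrix (Fin m) (Fin m) ℝ) (μ : ℝ) :
    Matrix (Fin m ⊕ Unit) (Fin m ⊕ Unit) ℝ :=
  Matrix.fromBlocks M 0 0 (Matrix.of fun _ _ => μ)

/-!
The map `(z, t) ↦ (ρ t_k I - S_k[z]²)_k` is concave for the order of quadratic forms, and the
positive point of `𝒯` is a Slater point for it. Hence `2 pᵀ P z` is bounded by `γ - q` on the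
feasible set iff there is a nonnegative multiplier, that is, a tuple of positive semidefinite `Λ_k`,
with `2 pᵀ P z + ∑_k Tr (Λ_k (ρ t_k I - S_k[z]²)) ≤ γ - q` for all `z` and all `t ∈ 𝒯`.
As `Tr (Λ_k S_k[z]²) = zᵀ 𝒮_k^*[Λ_k] z`, maximizing over `t` produces `ρ φ_𝒯(λ[Λ])`, and the
remaining inequality in `z` says that a quadratic function of `z` is nonnegative, which is positive
semidefiniteness of the bordered matrix.
-/

section ConeDuality

variable {V E : Type*} [AddCommGroup V] [Module ℝ V] [AddCommGroup E] [Module ℝ E]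

/-- Concavity on `s` of a map `H` into a vector space preordered by a convex cone `C`
(`a ≤ b` meaning `b - a ∈ C`). `ConcaveOn` does not apply, since the cones used here contain lines
and so induce no partial order. -/
def ConcaveOnCone (C : PointedCone ℝ E) (s : Set V) (H : V → E) : Prop :=
  Convex ℝ s ∧ ∀ ⦃x⦄, x ∈ s → ∀ ⦃y⦄, y ∈ s → ∀ ⦃a b : ℝ⦄, 0 ≤ a → 0 ≤ b → a + b = 1 →
    H (a • x + b • y) - (a • H x + b • H y) ∈ C

variable {C : PointedCone ℝ E} {s : Set V}

lemma ConcaveOnCone.convex_hypograph {H : V → E} (hH : ConcaveOnCone C s H) :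
    Convex ℝ {y | ∃ x ∈ s, H x - y ∈ C} := by
  rintro y₁ ⟨x₁, hx₁, h₁⟩ y₂ ⟨x₂, hx₂, h₂⟩ a b ha hb hab
  refine ⟨a • x₁ + b • x₂, hH.1 hx₁ hx₂ ha hb hab, ?_⟩
  have hdecomp : H (a • x₁ + b • x₂) - (a • y₁ + b • y₂) =
      (H (a • x₁ + b • x₂) - (a • H x₁ + b • H x₂)) +
        (a • (H x₁ - y₁) + b • (H x₂ - y₂)) := by module
  rw [hdecomp]
  exact C.add_mem (hH.2 hx₁ hx₂ ha hb hab)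
    (C.add_mem (C.smul_mem ha h₁) (C.smul_mem hb h₂))

lemma ConcaveOnCone.prodMk_positive {G : V → E} {φ : V → ℝ} (hG : ConcaveOnCone C s G)
    (hφ : ConcaveOn ℝ s φ) :
    ConcaveOnCone (C.prod (PointedCone.positive ℝ ℝ)) s fun x => (G x, φ x) :=
  ⟨hG.1, fun _ hx _ hy _ _ ha hb hab =>
    ⟨hG.2 hx hy ha hb hab, sub_nonneg.2 (hφ.2 hx hy ha hb hab)⟩⟩

lemma map_nonpos_of_forall_mem_le {l : E →ₗ[ℝ] ℝ} {u : ℝ} (hle : ∀ y ∈ C, l y ≤ u) {y : E}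
    (hy : y ∈ C) : l y ≤ 0 := by
  have hu : 0 ≤ u := by simpa only [map_zero] using hle 0 C.zero_mem
  by_contra! hpos
  have h := hle _ (C.smul_mem (r := (u + 1) / l y) (by positivity) hy)
  rw [map_smul, smul_eq_mul, div_mul_cancel₀ _ hpos.ne'] at h
  linarith

variable [TopologicalSpace E]

lemma interior_prod_positive :
    interior (C.prod (PointedCone.positive ℝ ℝ) : Set (E × ℝ)) =
      interior (C : Set E) ×ˢ Set.Ioi 0 := by
  rw [Submodule.prod_coe, interior_prod_eq, ← interior_Ici]
  rfl

variable [IsTopologicalAddGroup E] [ContinuousSMul ℝ E]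

lemma pos_of_mem_interior_of_forall_nonneg {S : Set E} {l : StrongDual ℝ E} (hl : l ≠ 0)
    (hS : ∀ y ∈ S, 0 ≤ l y) {e : E} (he : e ∈ interior S) : 0 < l e := by
  have hsub : l '' interior S ⊆ interior (Set.Ici 0) :=
    interior_maximal (by rintro _ ⟨y, hy, rfl⟩; exact hS y (interior_subset hy))
      (l.isOpenMap_of_ne_zero hl _ isOpen_interior)
  simpa only [interior_Ici, Set.mem_Ioi] using hsub ⟨e, he, rfl⟩

open scoped Pointwise in
lemma exists_dual_nonneg_of_forall_notMem_interior {H : V → E}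
    (hC : (interior (C : Set E)).Nonempty) (hs : s.Nonempty) (hH : ConcaveOnCone C s H)
    (hdisj : ∀ x ∈ s, H x ∉ interior (C : Set E)) :
    ∃ l : StrongDual ℝ E, l ≠ 0 ∧ (∀ y ∈ C, 0 ≤ l y) ∧ ∀ x ∈ s, l (H x) ≤ 0 := by
  have hdisj' : Disjoint (interior (C : Set E)) {y | ∃ x ∈ s, H x - y ∈ C} := by
    refine Set.disjoint_left.2 fun y hy ⟨x, hx, hxy⟩ => hdisj x hx ?_
    have hadd : (C : Set E) + (C : Set E) ⊆ C := by
      rintro _ ⟨y, hy, z, hz, rfl⟩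
      exact C.add_mem hy hz
    exact interior_mono hadd (subset_interior_add_left ⟨y, hy, _, hxy, add_sub_cancel _ _⟩)
  obtain ⟨l, u, hlt, hle⟩ := geometric_hahn_banach_open C.convex.interior isOpen_interior
    hH.convex_hypograph hdisj'
  have hleH : ∀ x ∈ s, u ≤ l (H x) := fun x hx =>
    hle _ ⟨x, hx, by simp only [sub_self, C.zero_mem]⟩
  have hCle : ∀ y ∈ C, l y ≤ u := by
    have hclosure : closure (interior (C : Set E)) ⊆ {y | l y ≤ u} :=
      closure_minimal (fun y hy => (hlt y hy).le) (isClosed_le l.continuous continuous_const)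
    rw [C.convex.closure_interior_eq_closure_of_nonempty_interior hC] at hclosure
    exact fun y hy => hclosure (subset_closure hy)
  have hu : 0 ≤ u := by simpa only [map_zero] using hCle 0 C.zero_mem
  have hCnonpos : ∀ y ∈ C, l y ≤ 0 := fun y =>
    map_nonpos_of_forall_mem_le (l := l.toLinearMap) hCle
  refine ⟨-l, ?_, fun y hy => neg_nonneg.2 (hCnonpos y hy),
    fun x hx => neg_nonpos.2 (hu.trans (hleH x hx))⟩
  intro hl
  obtain ⟨e, he⟩ := hC
  obtain ⟨x, hx⟩ := hs
  have := (hlt e he).trans_le (hleH x hx)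
  simp [neg_eq_zero.1 hl] at this

theorem exists_lagrange_multiplier {G : V → E} {φ : V → ℝ} {c : ℝ}
    (hG : ConcaveOnCone C s G) (hφ : ConcaveOn ℝ s φ)
    (slater : ∃ x ∈ s, G x ∈ interior (C : Set E)) (hle : ∀ x ∈ s, G x ∈ C → φ x ≤ c) :
    ∃ l : StrongDual ℝ E, (∀ y ∈ C, 0 ≤ l y) ∧ ∀ x ∈ s, φ x + l (G x) ≤ c := by
  obtain ⟨x₀, hx₀, hGx₀⟩ := slater
  have hint : (G x₀, (1 : ℝ)) ∈ interior (C.prod (PointedCone.positive ℝ ℝ) : Set (E × ℝ)) :=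
    interior_prod_positive.ge ⟨hGx₀, Set.mem_Ioi.2 one_pos⟩
  obtain ⟨L, hL, hLC, hLs⟩ := exists_dual_nonneg_of_forall_notMem_interior ⟨_, hint⟩ ⟨x₀, hx₀⟩
    (hG.prodMk_positive (hφ.sub (convexOn_const c hφ.1))) fun x hx hxint => by
      rw [interior_prod_positive] at hxint
      exact (hle x hx (interior_subset hxint.1)).not_gt (sub_pos.1 hxint.2)
  set l : StrongDual ℝ E := L.comp (.inl ℝ E ℝ)
  set μ := L (0, 1)
  have hsplit : ∀ y r, L (y, r) = l y + r * μ := by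
    intro y r
    have hyr : (y, r) = (y, 0) + r • ((0, 1) : E × ℝ) := by simp
    rw [hyr, map_add, map_smul]
    rfl
  have hμ : 0 < μ := by
    refine (hLC _ ⟨C.zero_mem, (PointedCone.mem_positive ℝ ℝ).2 zero_le_one⟩).lt_of_ne'
      fun hμ0 => ?_
    have hpos := pos_of_mem_interior_of_forall_nonneg hL hLC hint
    have hnonpos := hLs x₀ hx₀
    simp only [hsplit, show μ = 0 from hμ0, mul_zero, add_zero] at hpos hnonpos
    exact hpos.not_ge hnonpos
  have hl : ∀ y ∈ C, 0 ≤ l y := fun y hy => hLC _ ⟨hy, (PointedCone.mem_positive ℝ ℝ).2 le_rfl⟩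
  refine ⟨μ⁻¹ • l, fun y hy => mul_nonneg (inv_nonneg.2 hμ.le) (hl y hy), fun x hx => ?_⟩
  have hlx : μ⁻¹ * l (G x) ≤ c - φ x := by
    rw [inv_mul_le_iff₀ hμ]
    linarith [(hsplit (G x) (φ x - c)).symm.trans_le (hLs x hx)]
  exact le_sub_iff_add_le'.1 hlx

end ConeDuality

section QuadFormCone

variable {m : Type*} [Fintype m]

/-- The cone of real square matrices with nonnegative quadratic form. No symmetry is imposed, so
that, unlike the cone of positive semidefinite matrices, it has interior points in the space of all
matrices. -/
def quadFormCone (m : Type*) [Fintype m] : PointedCone ℝ (Matrix m m ℝ) where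
  carrier := {N | ∀ x, 0 ≤ x ⬝ᵥ N *ᵥ x}
  zero_mem' x := by simp
  add_mem' hM hN x := by
    rw [add_mulVec, dotProduct_add]
    exact add_nonneg (hM x) (hN x)
  smul_mem' c N hN x := by
    rw [smul_mulVec, dotProduct_smul]
    exact mul_nonneg c.2 (hN x)

lemma mem_quadFormCone {N : Matrix m m ℝ} : N ∈ quadFormCone m ↔ ∀ x, 0 ≤ x ⬝ᵥ N *ᵥ x := .rfl

lemma posSemidef_iff_isSymm_and_mem_quadFormCone {N : Matrix m m ℝ} :
    N.PosSemidef ↔ N.IsSymm ∧ N ∈ quadFormCone m := by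
  simp only [posSemidef_iff_dotProduct_mulVec, isHermitian_iff_isSymm, star_trivial,
    mem_quadFormCone]

lemma posSemidef_sq_of_isSymm [DecidableEq m] {A : Matrix m m ℝ} (hA : A.IsSymm) :
    (A ^ 2).PosSemidef := by
  have h := posSemidef_conjTranspose_mul_self A
  rwa [isHermitian_iff_isSymm.2 hA, ← sq] at h

lemma vecMulVec_self_mem_quadFormCone (v : m → ℝ) : vecMulVec v v ∈ quadFormCone m :=
  (posSemidef_iff_isSymm_and_mem_quadFormCone.1 (posSemidef_vecMulVec_self_star v)).2

lemma mem_interior_quadFormCone {N : Matrix m m ℝ} (hN : ∀ x, x ≠ 0 → 0 < x ⬝ᵥ N *ᵥ x) :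
    N ∈ interior (quadFormCone m : Set (Matrix m m ℝ)) := by
  rw [mem_interior_iff_mem_nhds]
  have hsphere : ∀ᶠ M in nhds N, ∀ x ∈ Metric.sphere (0 : m → ℝ) 1, 0 < x ⬝ᵥ M *ᵥ x := by
    refine (isCompact_sphere (0 : m → ℝ) 1).eventually_forall_of_forall_eventually
      (P := fun M x => 0 < x ⬝ᵥ M *ᵥ x) fun x hx => ?_
    have hcont : Continuous fun z : Matrix m m ℝ × (m → ℝ) => z.2 ⬝ᵥ z.1 *ᵥ z.2 := by fun_prop
    exact hcont.continuousAt.eventually_const_lt (hN x (ne_zero_of_mem_unit_sphere ⟨x, hx⟩))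
  filter_upwards [hsphere] with M hM x
  obtain rfl | hx := eq_or_ne x 0
  · simp
  · have h := hM (‖x‖⁻¹ • x) (by simp [norm_smul, hx])
    rw [mulVec_smul, dotProduct_smul, smul_dotProduct, smul_smul] at h
    exact (pos_of_mul_pos_right h (by positivity)).le

lemma smul_one_mem_interior_quadFormCone [DecidableEq m] {r : ℝ} (hr : 0 < r) :
    r • (1 : Matrix m m ℝ) ∈ interior (quadFormCone m : Set (Matrix m m ℝ)) :=
  mem_interior_quadFormCone fun x hx => by
    rw [smul_mulVec, one_mulVec, dotProduct_smul]
    exact mul_pos hr (by simpa using dotProduct_star_self_pos_iff.2 hx)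

lemma posSemidef_iff_forall_trace_mul_nonneg {Λ : Matrix m m ℝ} :
    Λ.PosSemidef ↔ ∀ N ∈ quadFormCone m, 0 ≤ (Λ * N).trace := by
  constructor
  · intro hΛ N hN
    obtain ⟨d, v, rfl⟩ := posSemidef_iff_eq_sum_vecMulVec.1 hΛ
    rw [Finset.sum_mul, trace_sum]
    refine Finset.sum_nonneg fun i _ => ?_
    rw [vecMulVec_mul, trace_vecMulVec, dotProduct_comm, ← dotProduct_mulVec, star_trivial]
    exact hN (v i)
  · intro h
    have hle : ∀ N, (Λ * Nᵀ).trace ≤ (Λ * N).trace := by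
      intro N
      -- A skew-symmetric matrix has zero quadratic form.
      have hskew : N - Nᵀ ∈ quadFormCone m := fun x => by
        rw [sub_mulVec, dotProduct_sub, dotProduct_transpose_mulVec, sub_self]
      simpa only [mul_sub, trace_sub, sub_nonneg] using h _ hskew
    have hsymm : Λ.IsSymm := ext_iff_trace_mul_right.2 fun N => by
      rw [← trace_transpose, transpose_mul, transpose_transpose, trace_mul_comm]
      exact (hle N).antisymm (by simpa only [transpose_transpose] using hle Nᵀ)
    refine posSemidef_iff_isSymm_and_mem_quadFormCone.2 ⟨hsymm, fun x => ?_⟩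
    rw [dotProduct_comm, ← trace_vecMulVec, ← mul_vecMulVec]
    exact h _ (vecMulVec_self_mem_quadFormCone x)

lemma trace_mul_nonneg_of_posSemidef {M N : Matrix m m ℝ} (hM : M.PosSemidef)
    (hN : N.PosSemidef) : 0 ≤ (M * N).trace :=
  posSemidef_iff_forall_trace_mul_nonneg.1 hM N (posSemidef_iff_isSymm_and_mem_quadFormCone.1 hN).2

lemma exists_forall_eq_trace_mul {m n R : Type*} [Fintype m] [Fintype n] [CommSemiring R]
    (l : Matrix m n R →ₗ[R] R) : ∃ Λ : Matrix n m R, ∀ N, l N = (Λ * N).trace := by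
  classical
  refine ⟨of fun j i => l (single i j 1), fun N => ?_⟩
  have hl : l = traceLinearMap n R R ∘ₗ mulLeftLinearMap n R (of fun j i => l (single i j 1)) := by
    refine ext_linearMap R fun i j => LinearMap.ext_ring ?_
    simp [trace_mul_single]
  exact DFunLike.congr_fun hl N

lemma exists_posSemidef_forall_eq_sum_trace_mul {ι : Type*} [Fintype ι] {m : ι → Type*}
    [∀ k, Fintype (m k)] (l : (∀ k, Matrix (m k) (m k) ℝ) →ₗ[ℝ] ℝ)
    (hl : ∀ N, (∀ k, N k ∈ quadFormCone (m k)) → 0 ≤ l N) :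
    ∃ Λ : ∀ k, Matrix (m k) (m k) ℝ, (∀ k, (Λ k).PosSemidef) ∧
      ∀ N, l N = ∑ k, (Λ k * N k).trace := by
  classical
  choose Λ hΛ using fun k =>
    exists_forall_eq_trace_mul (l ∘ₗ LinearMap.single ℝ (fun k => Matrix (m k) (m k) ℝ) k)
  refine ⟨Λ, fun k => posSemidef_iff_forall_trace_mul_nonneg.2 fun N hN => ?_, fun N => ?_⟩
  · rw [← hΛ]
    refine hl _ fun j => ?_
    obtain rfl | hj := eq_or_ne j k
    · simpa using hN
    · simp [hj]
  · conv_lhs => rw [← Finset.univ_sum_single N, map_sum]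
    exact Finset.sum_congr rfl fun k _ => hΛ k (N k)

end QuadFormCone

section SpectralSquares

variable {V : Type*} [AddCommGroup V] [Module ℝ V] {ι : Type*} {m : ι → Type*} [∀ k, Fintype (m k)]
  [∀ k, DecidableEq (m k)]

/-- The slack matrix of the `k`-th constraint `A_k[z]² ⪯ ρ t_k I`, as a function of the joint
variable `w = (z, t)`, in which it is concave. -/
def spectralSlack (A : ∀ k, V →ₗ[ℝ] Matrix (m k) (m k) ℝ) (ρ : ℝ) (w : V × (ι → ℝ)) (k : ι) :
    Matrix (m k) (m k) ℝ :=
  (ρ * w.2 k) • 1 - A k w.1 ^ 2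

variable {A : ∀ k, V →ₗ[ℝ] Matrix (m k) (m k) ℝ}

lemma spectralSlack_isSymm (hA : ∀ k z, (A k z).IsSymm) (ρ : ℝ) (w : V × (ι → ℝ)) (k : ι) :
    (spectralSlack A ρ w k).IsSymm :=
  (isSymm_one.smul _).sub ((hA k w.1).pow 2)

lemma smul_sq_add_smul_sq_sub_sq {R : Type*} [Ring R] [Algebra ℝ R] (x y : R) {a b : ℝ}
    (hab : a + b = 1) :
    a • x ^ 2 + b • y ^ 2 - (a • x + b • y) ^ 2 = (a * b) • (x - y) ^ 2 := by
  obtain rfl : b = 1 - a := by linarith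
  simp only [sq, add_mul, mul_add, sub_mul, mul_sub, smul_mul_assoc, mul_smul_comm]
  module

lemma concaveOnCone_spectralSlack (hA : ∀ k z, (A k z).IsSymm) (ρ : ℝ) {T : Set (ι → ℝ)}
    (hT : Convex ℝ T) :
    ConcaveOnCone (Submodule.pi Set.univ fun k => quadFormCone (m k)) (Set.univ ×ˢ T)
      (spectralSlack A ρ) := by
  refine ⟨convex_univ.prod hT, fun w₁ _ w₂ _ a b ha hb hab k _ => ?_⟩
  have hgap : spectralSlack A ρ (a • w₁ + b • w₂) k -
      (a • spectralSlack A ρ w₁ k + b • spectralSlack A ρ w₂ k) =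
        (a * b) • A k (w₁.1 - w₂.1) ^ 2 := by
    rw [map_sub, ← smul_sq_add_smul_sq_sub_sq _ _ hab]
    simp only [spectralSlack, Prod.fst_add, Prod.smul_fst, Prod.snd_add, Prod.smul_snd, map_add,
      map_smul, Pi.add_apply, Pi.smul_apply, smul_eq_mul]
    module
  have hsq := posSemidef_sq_of_isSymm (hA k (w₁.1 - w₂.1))
  exact (congrArg (· ∈ quadFormCone (m k)) hgap).mpr <| (quadFormCone (m k)).smul_mem
    (mul_nonneg ha hb) (posSemidef_iff_isSymm_and_mem_quadFormCone.1 hsq).2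

theorem forall_le_iff_exists_multipliers [Fintype ι] (hA : ∀ k z, (A k z).IsSymm)
    {T : Set (ι → ℝ)} (hT : Convex ℝ T) {ρ : ℝ} (slater : ∃ t ∈ T, ∀ k, 0 < ρ * t k) {φ : V → ℝ}
    (hφ : ConcaveOn ℝ Set.univ φ) {c : ℝ} :
    (∀ z, ∀ t ∈ T, (∀ k, (spectralSlack A ρ (z, t) k).PosSemidef) → φ z ≤ c) ↔
      ∃ Λ : ∀ k, Matrix (m k) (m k) ℝ, (∀ k, (Λ k).PosSemidef) ∧
        ∀ z, ∀ t ∈ T, φ z + ∑ k, (Λ k * spectralSlack A ρ (z, t) k).trace ≤ c := by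
  constructor
  · intro h
    obtain ⟨t₀, ht₀, ht₀pos⟩ := slater
    have hinterior : spectralSlack A ρ (0, t₀) ∈ interior
        (Submodule.pi Set.univ fun k => quadFormCone (m k) : Set (∀ k, Matrix (m k) (m k) ℝ)) := by
      rw [Submodule.coe_pi, interior_pi_set Set.finite_univ]
      intro k _
      simpa [spectralSlack] using smul_one_mem_interior_quadFormCone (ht₀pos k)
    have hφT : ConcaveOn ℝ (Set.univ ×ˢ T) fun w : V × (ι → ℝ) => φ w.1 :=
      (hφ.comp_linearMap (LinearMap.fst ℝ V _)).subset (Set.subset_univ _)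
        (convex_univ.prod hT)
    obtain ⟨l, hl, hle⟩ := exists_lagrange_multiplier (concaveOnCone_spectralSlack hA ρ hT) hφT
      ⟨(0, t₀), ⟨trivial, ht₀⟩, hinterior⟩ fun w hw hmem => h w.1 w.2 hw.2 fun k =>
        posSemidef_iff_isSymm_and_mem_quadFormCone.2 ⟨spectralSlack_isSymm hA ρ w k, hmem k trivial⟩
    obtain ⟨Λ, hΛ, hrep⟩ := exists_posSemidef_forall_eq_sum_trace_mul l.toLinearMap
      fun N hN => hl N fun k _ => hN k
    refine ⟨Λ, hΛ, fun z t ht => ?_⟩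
    rw [← hrep]
    exact hle (z, t) ⟨trivial, ht⟩
  · rintro ⟨Λ, hΛ, hle⟩ z t ht hslack
    have hnonneg : 0 ≤ ∑ k, (Λ k * spectralSlack A ρ (z, t) k).trace :=
      Finset.sum_nonneg fun k _ => trace_mul_nonneg_of_posSemidef (hΛ k) (hslack k)
    exact (le_add_of_nonneg_right hnonneg).trans (hle z t ht)

end SpectralSquares

section Bordered

variable {m : Type*} [Fintype m]

lemma dotProduct_fromBlocks_unit_mulVec {R : Type*} [CommRing R] (α : R) (v : m → R)
    (M : Matrix m m R) (s : R) (z : m → R) :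
    Sum.elim (fun _ => s) z ⬝ᵥ fromBlocks (of fun _ _ : Unit => α) (of fun _ j => v j)
      (of fun i _ => v i) M *ᵥ Sum.elim (fun _ => s) z =
    α * s ^ 2 + 2 * s * (v ⬝ᵥ z) + z ⬝ᵥ M *ᵥ z := by
  have hrow : (of fun (_ : Unit) j => v j) *ᵥ z = fun _ => v ⬝ᵥ z := rfl
  have hcol : (of fun i (_ : Unit) => v i) *ᵥ (fun _ => s) = s • v := by
    ext i
    simp [mulVec, dotProduct, mul_comm]
  rw [fromBlocks_mulVec, sumElim_dotProduct_sumElim, Sum.elim_comp_inl, Sum.elim_comp_inr, hrow,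
    hcol, dotProduct_add z, dotProduct_smul, dotProduct_comm z v]
  simp only [dotProduct_add, dotProduct_pUnit, mulVec, of_apply, smul_eq_mul]
  ring

lemma posSemidef_fromBlocks_unit_iff {α : ℝ} {v : m → ℝ} {M : Matrix m m ℝ} :
    (fromBlocks (of fun _ _ : Unit => α) (of fun _ j => v j) (of fun i _ => v i) M).PosSemidef ↔
      M.PosSemidef ∧ ∀ z, 0 ≤ α + 2 * (v ⬝ᵥ z) + z ⬝ᵥ M *ᵥ z := by
  constructor
  · refine fun h => ⟨h.submatrix Sum.inr, fun z => ?_⟩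
    have := h.dotProduct_mulVec_nonneg (Sum.elim (fun _ => 1) z)
    rw [star_trivial, dotProduct_fromBlocks_unit_mulVec] at this
    simpa using this
  · rintro ⟨hM, h⟩
    refine .of_dotProduct_mulVec_nonneg (.fromBlocks (by ext; simp) (by ext; simp) hM.1) fun x => ?_
    obtain ⟨s, z, rfl⟩ : ∃ s z, x = Sum.elim (fun _ => s) z :=
      ⟨x (.inl ()), x ∘ .inr, (Sum.elim_comp_inl_inr x).symm⟩
    rw [star_trivial, dotProduct_fromBlocks_unit_mulVec]
    obtain rfl | hs := eq_or_ne s 0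
    · simpa using hM.dotProduct_mulVec_nonneg z
    · have hscale := mul_nonneg (sq_nonneg s) (h (s⁻¹ • z))
      simp only [mulVec_smul, dotProduct_smul, smul_dotProduct, smul_eq_mul] at hscale
      convert hscale using 1
      field_simp

end Bordered

section Spectratope

variable {n nb K : ℕ} {f : Fin K → ℕ}

lemma dotProduct_calSstar_mulVec {fk : ℕ} (Sm : Fin nb → Matrix (Fin fk) (Fin fk) ℝ)
    (Λ : Matrix (Fin fk) (Fin fk) ℝ) (z : Fin nb → ℝ) :
    z ⬝ᵥ calSstar Sm Λ *ᵥ z = (Λ * (∑ i, z i • Sm i) ^ 2).trace := by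
  let τ : Fin nb → Fin nb → ℝ := fun i j => (Λ * (Sm i * Sm j)).trace
  have hcalSstar : ∀ i j, calSstar Sm Λ i j = (τ i j + τ j i) / 2 := by
    intro i j
    simp only [calSstar, of_apply, mul_smul_comm, mul_add, trace_smul, trace_add, smul_eq_mul, τ]
    ring
  have hswap : ∑ i, ∑ j, z i * z j * τ j i = ∑ i, ∑ j, z i * z j * τ i j := by
    rw [Finset.sum_comm]
    simp only [mul_comm (z _) (z _)]
  calc z ⬝ᵥ calSstar Sm Λ *ᵥ z
      = (∑ i, ∑ j, z i * z j * τ i j + ∑ i, ∑ j, z i * z j * τ j i) / 2 := by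
        simp only [dotProduct, mulVec, hcalSstar, Finset.mul_sum, Finset.sum_div,
          ← Finset.sum_add_distrib]
        exact Finset.sum_congr rfl fun i _ => Finset.sum_congr rfl fun j _ => by ring
    _ = ∑ i, ∑ j, z i * z j * τ i j := by rw [hswap, add_self_div_two]
    _ = (Λ * (∑ i, z i • Sm i) ^ 2).trace := by
        simp only [sq, Finset.sum_mul_sum, smul_mul_smul_comm]
        simp only [Finset.mul_sum, trace_sum, mul_smul_comm, trace_smul, smul_eq_mul, τ]

lemma calSstar_isSymm {fk : ℕ} (Sm : Fin nb → Matrix (Fin fk) (Fin fk) ℝ)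
    (Λ : Matrix (Fin fk) (Fin fk) ℝ) : (calSstar Sm Λ).IsSymm := by
  ext i j
  simp only [calSstar, transpose_apply, of_apply, add_comm]

variable {P : Matrix (Fin n) (Fin nb) ℝ} {Smat : ∀ k, Fin nb → Matrix (Fin (f k)) (Fin (f k)) ℝ}
  {Λ : ∀ k, Matrix (Fin (f k)) (Fin (f k)) ℝ} {T : Set (Fin K → ℝ)} {ρ : ℝ}

lemma linearCombination_isSymm {fk : ℕ} {Sm : Fin nb → Matrix (Fin fk) (Fin fk) ℝ}
    (hSm : ∀ i, (Sm i).IsSymm) (z : Fin nb → ℝ) :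
    (Fintype.linearCombination ℝ Sm z).IsSymm := by
  simp only [IsSymm, Fintype.linearCombination_apply, transpose_sum, transpose_smul, (hSm _).eq]

lemma posSemidef_calSstar {fk : ℕ} {Sm : Fin nb → Matrix (Fin fk) (Fin fk) ℝ}
    (hSm : ∀ i, (Sm i).IsSymm) {Λ : Matrix (Fin fk) (Fin fk) ℝ} (hΛ : Λ.PosSemidef) :
    (calSstar Sm Λ).PosSemidef :=
  posSemidef_iff_isSymm_and_mem_quadFormCone.2 ⟨calSstar_isSymm Sm Λ, fun z => by
    rw [dotProduct_calSstar_mulVec]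
    exact trace_mul_nonneg_of_posSemidef hΛ
      (posSemidef_sq_of_isSymm (linearCombination_isSymm hSm z))⟩

lemma forall_mem_spectratope_iff {b : ℝ} {ψ : (Fin n → ℝ) → ℝ} :
    (∀ ζ ∈ spectratope f P Smat T ρ, ψ ζ ≤ b) ↔ ∀ z, ∀ t ∈ T,
      (∀ k, (spectralSlack (fun k => Fintype.linearCombination ℝ (Smat k)) ρ (z, t) k).PosSemidef) →
        ψ (P *ᵥ z) ≤ b :=
  ⟨fun h z t ht hz => h _ ⟨z, t, ht, rfl, hz⟩, by
    rintro h _ ⟨z, t, ht, rfl, hz⟩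
    exact h z t ht hz⟩

lemma sum_trace_mul_spectralSlack (z : Fin nb → ℝ) (t : Fin K → ℝ) :
    ∑ k, (Λ k *
      spectralSlack (fun k => Fintype.linearCombination ℝ (Smat k)) ρ (z, t) k).trace =
      ρ * ∑ k, lamOf Λ k * t k - z ⬝ᵥ (∑ k, calSstar (Smat k) (Λ k)) *ᵥ z := by
  simp only [spectralSlack, Fintype.linearCombination_apply, sum_mulVec, dotProduct_sum,
    dotProduct_calSstar_mulVec, Finset.mul_sum, ← Finset.sum_sub_distrib, mul_sub, trace_sub,
    mul_smul_comm, mul_one, trace_smul, smul_eq_mul, lamOf]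
  exact Finset.sum_congr rfl fun k _ => by ring

lemma isLUB_suppFn (hTne : T.Nonempty) (hTbdd : BddAbove T) {lam : Fin K → ℝ} (hlam : 0 ≤ lam) :
    IsLUB ((fun t => ∑ k, lam k * t k) '' T) (suppFn T lam) := by
  refine isLUB_csSup (hTne.image _) (Monotone.map_bddAbove (fun t t' ht => ?_) hTbdd)
  exact Finset.sum_le_sum fun k _ => mul_le_mul_of_nonneg_left (ht k) (hlam k)

lemma mul_suppFn_le_iff (hTne : T.Nonempty) (hTbdd : BddAbove T) (hρ : 0 < ρ) {lam : Fin K → ℝ}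
    (hlam : 0 ≤ lam) {b : ℝ} :
    ρ * suppFn T lam ≤ b ↔ ∀ t ∈ T, ρ * ∑ k, lam k * t k ≤ b := by
  simp only [mul_comm ρ, ← le_div_iff₀ hρ, isLUB_le_iff (isLUB_suppFn hTne hTbdd hlam),
    mem_upperBounds, Set.forall_mem_image]

lemma forall_lagrangian_le_iff_exists_posSemidef_fromBlocks (hSm : ∀ k i, (Smat k i).IsSymm)
    (hTne : T.Nonempty) (hTbdd : BddAbove T) (hρ : 0 < ρ) (hΛ : ∀ k, (Λ k).PosSemidef)
    {p : Fin n → ℝ} {c : ℝ} :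
    (∀ z, ∀ t ∈ T, 2 * (p ⬝ᵥ P *ᵥ z) + ∑ k, (Λ k *
        spectralSlack (fun k => Fintype.linearCombination ℝ (Smat k)) ρ (z, t) k).trace ≤ c) ↔
      ∃ α : ℝ, (fromBlocks (of fun _ _ : Unit => α) (of fun _ j => -(Pᵀ *ᵥ p) j)
          (of fun i _ => -(Pᵀ *ᵥ p) i) (∑ k, calSstar (Smat k) (Λ k))).PosSemidef ∧
        α + ρ * suppFn T (lamOf Λ) ≤ c := by
  set Q := ∑ k, calSstar (Smat k) (Λ k) with hQdef
  have hQ : Q.PosSemidef := posSemidef_sum _ fun k _ => posSemidef_calSstar (hSm k) (hΛ k)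
  have hlam : 0 ≤ lamOf Λ := fun k => (hΛ k).trace_nonneg
  have hlin : ∀ z, (fun j => -(Pᵀ *ᵥ p) j) ⬝ᵥ z = -(p ⬝ᵥ P *ᵥ z) := fun z => by
    rw [dotProduct_mulVec, ← mulVec_transpose]
    exact neg_dotProduct _ _
  have hsup : ∀ z, (∀ t ∈ T, 2 * (p ⬝ᵥ P *ᵥ z) + (ρ * ∑ k, lamOf Λ k * t k - z ⬝ᵥ Q *ᵥ z) ≤ c) ↔
      ρ * suppFn T (lamOf Λ) ≤ c - 2 * (p ⬝ᵥ P *ᵥ z) + z ⬝ᵥ Q *ᵥ z := fun z => by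
    rw [mul_suppFn_le_iff hTne hTbdd hρ hlam]
    exact forall₂_congr fun t _ => by constructor <;> intro h <;> linarith
  simp only [sum_trace_mul_spectralSlack, ← hQdef, hsup, posSemidef_fromBlocks_unit_iff, hlin]
  constructor
  · exact fun h => ⟨c - ρ * suppFn T (lamOf Λ), ⟨hQ, fun z => by linarith [h z]⟩, by linarith⟩
  · rintro ⟨α, ⟨-, hα⟩, hle⟩ z
    linarith [hα z]

end Spectratope

theorem stmt13_general {n nb K : ℕ} (P : Matrix (Fin n) (Fin nb) ℝ) (f : Fin K → ℕ)
    (Smat : (k : Fin K) → Fin nb → Matrix (Fin (f k)) (Fin (f k)) ℝ)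
    (hSm : ∀ k i, (Smat k i).IsSymm)
    (T : Set (Fin K → ℝ)) (hTconv : Convex ℝ T) (hTbdd : BddAbove T)
    (hTpos : ∃ t ∈ T, ∀ k, 0 < t k) (ρ : ℝ) (hρ : 0 < ρ) (p : Fin n → ℝ) (q γ : ℝ) :
    (∀ ζ ∈ spectratope f P Smat T ρ, 2 * (p ⬝ᵥ ζ) + q ≤ γ) ↔
      ∃ Λ : (k : Fin K) → Matrix (Fin (f k)) (Fin (f k)) ℝ, ∃ α : ℝ,
        (∀ k, (Λ k).PosSemidef) ∧
        (fromBlocks (of fun _ _ : Unit => α) (of fun _ j => -(Pᵀ *ᵥ p) j)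
          (of fun i _ => -(Pᵀ *ᵥ p) i) (∑ k, calSstar (Smat k) (Λ k))).PosSemidef ∧
        α + ρ * suppFn T (lamOf Λ) + q ≤ γ := by
  have hsymm : ∀ k z, (Fintype.linearCombination ℝ (Smat k) z).IsSymm :=
    fun k => linearCombination_isSymm (hSm k)
  have hconc : ConcaveOn ℝ Set.univ fun z => 2 * (p ⬝ᵥ P *ᵥ z) :=
    ((2 : ℝ) • dotProductBilin ℝ ℝ p ∘ₗ P.mulVecLin).concaveOn convex_univ
  have hslater : ∃ t ∈ T, ∀ k, 0 < ρ * t k :=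
    hTpos.imp fun t ht => ⟨ht.1, fun k => mul_pos hρ (ht.2 k)⟩
  have hTne : T.Nonempty := hTpos.imp fun t ht => ht.1
  simp only [← le_sub_iff_add_le (c := γ)]
  rw [forall_mem_spectratope_iff (ψ := fun ζ => 2 * (p ⬝ᵥ ζ)),
    forall_le_iff_exists_multipliers hsymm hTconv hslater hconc]
  refine exists_congr fun Λ => ?_
  rw [exists_and_left]
  exact and_congr_right fun hΛ =>
    forall_lagrangian_le_iff_exists_posSemidef_fromBlocks hSm hTne hTbdd hρ hΛ

theorem stmt13 {n nb K : ℕ} (hK : 1 ≤ K)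
    (P : Matrix (Fin n) (Fin nb) ℝ)
    (f : Fin K → ℕ) (hf : ∀ k, 1 ≤ f k)
    (Smat : (k : Fin K) → Fin nb → Matrix (Fin (f k)) (Fin (f k)) ℝ)
    (hSm : ∀ k i, (Smat k i).IsSymm)
    (hnd : ∀ z : Fin nb → ℝ, (∀ k, (∑ i, z i • Smat k i) = 0) → z = 0)
    (T : Set (Fin K → ℝ))
    (hTne : T.Nonempty) (hTconv : Convex ℝ T) (hTcomp : IsCompact T)
    (hTnonneg : ∀ t ∈ T, ∀ k, 0 ≤ t k)
    (hTmono : ∀ t t' : Fin K → ℝ, (∀ k, 0 ≤ t k) → (∀ k, t k ≤ t' k) → t' ∈ T → t ∈ T)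
    (hTpos : ∃ t ∈ T, ∀ k, 0 < t k)
    (ρ : ℝ) (hρ : 0 < ρ)
    (p : Fin n → ℝ) (q γ : ℝ) :
    (∀ ζ ∈ spectratope f P Smat T ρ, 2 * (p ⬝ᵥ ζ) + q ≤ γ) ↔
      (∃ Λ : (k : Fin K) → Matrix (Fin (f k)) (Fin (f k)) ℝ, ∃ α : ℝ,
        (∀ k, (Λ k).PosSemidef) ∧
        (Matrix.fromBlocks (Matrix.of fun (_ : Unit) (_ : Unit) => α)
            (Matrix.of fun (_ : Unit) j => -(Pᵀ *ᵥ p) j)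
            (Matrix.of fun i (_ : Unit) => -(Pᵀ *ᵥ p) i)
            (∑ k, calSstar (Smat k) (Λ k))).PosSemidef ∧
        α + ρ * suppFn T (lamOf Λ) + q ≤ γ) :=
  stmt13_general P f Smat hSm T hTconv hTcomp.isBounded.bddAbove hTpos ρ hρ p q γ
end
end

section
/- Let P be a real n×n̄ matrix, Q̄ a symmetric positive definite n̄×n̄ matrix, and let 𝒟 = { Pz : z ∈ ℝ^{n̄}, zᵀQ̄z ≤ 1 }. Let X be a symmetric n×n matrix, x ∈ ℝ^n, and ξ ∈ ℝ. Then ζᵀXζ + 2xᵀζ ≤ ξ holds for every ζ ∈ 𝒟 if and only if there exists λ ≥ 0 such that the block matrix [[λQ̄ − PᵀXP, −Pᵀx],[−xᵀP, ξ − λ]] is positive semidefinite. -/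
open Matrix BigOperators

noncomputable section

/-!
A quadratic function on `ℝᵐ` is the restriction of a quadratic form on `ℝᵐ × ℝ` to the affine
hyperplane of vectors with last coordinate `1`, and the ellipsoid is the part of that hyperplane
where the form `t² - zᵀQz` is nonnegative. Rescaling, and letting a point of the hyperplane escape
to infinity along a direction of the parallel linear hyperplane, turn an implication
`0 ≤ g → 0 ≤ f` on the affine hyperplane into one on the whole space. There the homogeneous S-lemma
applies: on the segment from a point with `0 < g` to a point with `g < 0` the form `g` vanishes
somewhere, and nonnegativity of `f` at that point compares the ratios `f / g` at the two ends, so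
the infimum of `f / g` over `{0 < g}` is the required multiplier.
-/

section QuadraticForms

variable {V : Type*} [AddCommGroup V] [Module ℝ V] {f g : QuadraticForm ℝ V} {u v : V}

lemma quadraticForm_smul_add_smul (f : QuadraticForm ℝ V) (u v : V) (a b : ℝ) :
    f (a • u + b • v) = a ^ 2 * f u + a * b * QuadraticMap.polar f u v + b ^ 2 * f v := by
  rw [QuadraticMap.map_add f, QuadraticMap.polar_smul_left, QuadraticMap.polar_smul_right,
    QuadraticMap.map_smul, QuadraticMap.map_smul]
  simp only [smul_eq_mul]
  ring

lemma exists_quadraticForm_segment_eq_zero (hu : 0 < g u) (hv : g v < 0) :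
    ∃ s ∈ Set.Ioo (0 : ℝ) 1, g ((1 - s) • u + s • v) = 0 := by
  have hcont : Continuous fun s : ℝ => g ((1 - s) • u + s • v) := by
    simp only [quadraticForm_smul_add_smul]
    fun_prop
  exact intermediate_value_Ioo' zero_le_one hcont.continuousOn (by simpa using ⟨hv, hu⟩)

lemma quadraticForm_nonneg_of_nonneg_on_zeros (hu : 0 < g u) (hv : g v < 0) (hfu : f u = 0)
    (h : ∀ w, g w = 0 → 0 ≤ f w) : 0 ≤ f v := by
  wlog hpolar : QuadraticMap.polar f u v ≤ 0 generalizing v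
  · rw [← QuadraticMap.map_neg]
    refine this (by rwa [QuadraticMap.map_neg]) ?_
    rw [QuadraticMap.polar_neg_right]
    linarith
  obtain ⟨s, ⟨hs0, hs1⟩, hgs⟩ := exists_quadraticForm_segment_eq_zero hu hv
  have hfs : 0 ≤ (1 - s) * s * QuadraticMap.polar f u v + s ^ 2 * f v := by
    simpa only [quadraticForm_smul_add_smul, hfu, mul_zero, zero_add] using h _ hgs
  have hmixed : (1 - s) * s * QuadraticMap.polar f u v ≤ 0 :=
    mul_nonpos_of_nonneg_of_nonpos (mul_nonneg (sub_nonneg.2 hs1.le) hs0.le) hpolar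
  exact nonneg_of_mul_nonneg_right (by linarith) (pow_pos hs0 2)

lemma quadraticForm_mul_le_mul_of_nonneg_imp (h : ∀ w, 0 ≤ g w → 0 ≤ f w)
    (hu : 0 < g u) (hv : g v < 0) : f u * g v ≤ f v * g u := by
  have hcomb : 0 ≤ (g u • f - f u • g) v := by
    refine quadraticForm_nonneg_of_nonneg_on_zeros hu hv ?_ fun w hw => ?_
    · simp [mul_comm]
    · simpa [hw] using mul_nonneg hu.le (h w hw.ge)
  simp only [_root_.sub_apply, _root_.smul_apply, smul_eq_mul] at hcomb
  linarith

theorem exists_nonneg_forall_mul_quadraticForm_le (h : ∀ v, 0 ≤ g v → 0 ≤ f v)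
    (hg : ∃ u, 0 < g u) : ∃ c : ℝ, 0 ≤ c ∧ ∀ v, c * g v ≤ f v := by
  obtain ⟨u₀, hu₀⟩ := hg
  have : Nonempty {u // 0 < g u} := ⟨⟨u₀, hu₀⟩⟩
  have hratio : ∀ u : {u // 0 < g u}, 0 ≤ f u / g u := fun u =>
    div_nonneg (h _ u.2.le) u.2.le
  refine ⟨⨅ u : {u // 0 < g u}, f u / g u, le_ciInf hratio, fun v => ?_⟩
  rcases lt_trichotomy (g v) 0 with hv | hv | hv
  · rw [← div_le_iff_of_neg hv]
    refine le_ciInf fun u => ?_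
    rw [le_div_iff₀ u.2, div_mul_eq_mul_div, div_le_iff_of_neg hv]
    exact quadraticForm_mul_le_mul_of_nonneg_imp h u.2 hv
  · rw [hv, mul_zero]
    exact h v hv.ge
  · rw [← le_div_iff₀ hv]
    exact ciInf_le ⟨0, Set.forall_mem_range.2 hratio⟩ (⟨v, hv⟩ : {u // 0 < g u})

lemma leadingCoeff_nonneg_of_forall_nonneg {a b c : ℝ}
    (h : ∀ s : ℝ, 0 < s → 0 ≤ a * s ^ 2 + b * s + c) : 0 ≤ a := by
  have hlim : Filter.Tendsto (fun s : ℝ => a + b * s + c * s ^ 2) (nhdsWithin 0 (Set.Ioi 0))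
      (nhds a) := by
    have hcont : Continuous fun s : ℝ => a + b * s + c * s ^ 2 := by fun_prop
    simpa using (hcont.tendsto 0).mono_left nhdsWithin_le_nhds
  refine ge_of_tendsto hlim ?_
  filter_upwards [self_mem_nhdsWithin] with s (hs : 0 < s)
  have hscale : a + b * s + c * s ^ 2 = s ^ 2 * (a * s⁻¹ ^ 2 + b * s⁻¹ + c) := by field_simp
  rw [hscale]
  exact mul_nonneg (sq_nonneg s) (h s⁻¹ (inv_pos.2 hs))

lemma quadraticForm_nonneg_of_nonneg_on_translates (hu : 0 < g u)
    (h : ∀ s : ℝ, 0 ≤ g (u + s • v) → 0 ≤ f (u + s • v)) (hv : 0 ≤ g v) : 0 ≤ f v := by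
  have hline (q : QuadraticForm ℝ V) (v : V) (s : ℝ) :
      q (u + s • v) = q v * s ^ 2 + QuadraticMap.polar q u v * s + q u := by
    rw [← one_smul ℝ u, quadraticForm_smul_add_smul, one_smul]
    ring
  wlog hpolar : 0 ≤ QuadraticMap.polar g u v generalizing v
  · rw [← QuadraticMap.map_neg]
    refine this (fun s => ?_) (by rwa [QuadraticMap.map_neg]) ?_
    · simpa only [smul_neg, neg_smul] using h (-s)
    · rw [QuadraticMap.polar_neg_right]
      linarith
  refine leadingCoeff_nonneg_of_forall_nonneg (b := QuadraticMap.polar f u v) (c := f u)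
    fun s hs => ?_
  rw [← hline]
  refine h s ?_
  rw [hline]
  positivity

lemma quadraticForm_nonneg_imp_of_affineHyperplane (φ : V →ₗ[ℝ] ℝ)
    (hg : ∃ u, φ u = 1 ∧ 0 < g u) (h : ∀ w, φ w = 1 → 0 ≤ g w → 0 ≤ f w)
    (hv : 0 ≤ g v) : 0 ≤ f v := by
  obtain ⟨u, hφu, hu⟩ := hg
  rcases eq_or_ne (φ v) 0 with hφv | hφv
  · exact quadraticForm_nonneg_of_nonneg_on_translates hu
      (fun s => h _ (by simp [hφu, hφv])) hv
  · have hfv := h ((φ v)⁻¹ • v) (by simp [hφv])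
    simp only [QuadraticMap.map_smul, smul_eq_mul] at hfv
    have hsq : 0 < (φ v)⁻¹ * (φ v)⁻¹ := mul_self_pos.2 (inv_ne_zero hφv)
    exact nonneg_of_mul_nonneg_right (hfv (mul_nonneg hsq.le hv)) hsq

end QuadraticForms

section Matrices

variable {k : Type*} [Fintype k]

lemma dotProduct_sub_smul_mulVec {R : Type*} [CommRing R] (M₀ M₁ : Matrix k k R) (c : R)
    (w : k → R) : w ⬝ᵥ (M₀ - c • M₁) *ᵥ w = w ⬝ᵥ M₀ *ᵥ w - c * (w ⬝ᵥ M₁ *ᵥ w) := by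
  rw [sub_mulVec, dotProduct_sub, smul_mulVec, dotProduct_smul, smul_eq_mul]

lemma exists_posSemidef_sub_smul_of_affineHyperplane {M₀ M₁ : Matrix k k ℝ}
    (hM₀ : M₀.IsSymm) (hM₁ : M₁.IsSymm) (φ : (k → ℝ) →ₗ[ℝ] ℝ)
    (hslater : ∃ w, φ w = 1 ∧ 0 < w ⬝ᵥ M₁ *ᵥ w)
    (h : ∀ w, φ w = 1 → 0 ≤ w ⬝ᵥ M₁ *ᵥ w → 0 ≤ w ⬝ᵥ M₀ *ᵥ w) :
    ∃ c : ℝ, 0 ≤ c ∧ (M₀ - c • M₁).PosSemidef := by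
  classical
  have hform (M : Matrix k k ℝ) (w : k → ℝ) : M.toQuadraticForm' w = w ⬝ᵥ M *ᵥ w :=
    toLinearMap₂'_apply' M w w
  simp only [← hform] at hslater h
  obtain ⟨c, hc, hle⟩ := exists_nonneg_forall_mul_quadraticForm_le
    (fun _ => quadraticForm_nonneg_imp_of_affineHyperplane φ hslater h)
    (hslater.imp fun _ => And.right)
  refine ⟨c, hc, .of_dotProduct_mulVec_nonneg
    (isHermitian_iff_isSymm.2 (hM₀.sub (hM₁.smul c))) fun w => ?_⟩
  rw [star_trivial, dotProduct_sub_smul_mulVec, ← hform, ← hform]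
  exact sub_nonneg.2 (hle w)

end Matrices

section BorderedMatrices

variable {m R : Type*}

/-- The square matrix `[[A, b], [bᵀ, d]]`, the matrix of the homogenization
`zᵀAz + 2t(bᵀz) + dt²` of the quadratic function `zᵀAz + 2bᵀz + d`; the index `Sum.inr ()` carries
the homogenizing coordinate `t`. -/
def borderedMatrix (A : Matrix m m R) (b : m → R) (d : R) : Matrix (m ⊕ Unit) (m ⊕ Unit) R :=
  fromBlocks A (of fun i _ => b i) (of fun _ j => b j) (of fun _ _ => d)

lemma isSymm_borderedMatrix {A : Matrix m m R} (hA : A.IsSymm) (b : m → R) (d : R) :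
    (borderedMatrix A b d).IsSymm :=
  hA.fromBlocks rfl rfl

lemma borderedMatrix_sub_smul [Ring R] (A₀ A₁ : Matrix m m R) (b₀ b₁ : m → R) (d₀ d₁ c : R) :
    borderedMatrix A₀ b₀ d₀ - c • borderedMatrix A₁ b₁ d₁ =
      borderedMatrix (A₀ - c • A₁) (b₀ - c • b₁) (d₀ - c * d₁) := by
  ext (_ | _) (_ | _) <;> simp [borderedMatrix]

variable [Fintype m]

lemma dotProduct_borderedMatrix_mulVec [CommSemiring R] (A : Matrix m m R) (b : m → R) (d : R)
    (z : m → R) :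
    Sum.elim z 1 ⬝ᵥ borderedMatrix A b d *ᵥ Sum.elim z 1 = z ⬝ᵥ A *ᵥ z + 2 * (b ⬝ᵥ z) + d := by
  have hcol : z ⬝ᵥ ((of fun i (_ : Unit) => b i) *ᵥ 1) = b ⬝ᵥ z := by
    simp [dotProduct, mulVec, mul_comm]
  have hrow : (1 : Unit → R) ⬝ᵥ ((of fun (_ : Unit) j => b j) *ᵥ z) = b ⬝ᵥ z := by
    simp [dotProduct, mulVec]
  have hcorner : (1 : Unit → R) ⬝ᵥ ((of fun (_ _ : Unit) => d) *ᵥ 1) = d := by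
    simp [dotProduct, mulVec]
  rw [borderedMatrix, fromBlocks_mulVec, sumElim_dotProduct_sumElim, Sum.elim_comp_inl,
    Sum.elim_comp_inr, dotProduct_add, dotProduct_add, hcol, hrow, hcorner]
  ring

theorem forall_quadratic_nonneg_imp_iff_exists_posSemidef {A₀ A₁ : Matrix m m ℝ}
    (hA₀ : A₀.IsSymm) (hA₁ : A₁.IsSymm) (b₀ b₁ : m → ℝ) (d₀ d₁ : ℝ)
    (hslater : ∃ z, 0 < z ⬝ᵥ A₁ *ᵥ z + 2 * (b₁ ⬝ᵥ z) + d₁) :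
    (∀ z, 0 ≤ z ⬝ᵥ A₁ *ᵥ z + 2 * (b₁ ⬝ᵥ z) + d₁ → 0 ≤ z ⬝ᵥ A₀ *ᵥ z + 2 * (b₀ ⬝ᵥ z) + d₀) ↔
      ∃ c : ℝ, 0 ≤ c ∧
        (borderedMatrix (A₀ - c • A₁) (b₀ - c • b₁) (d₀ - c * d₁)).PosSemidef := by
  simp only [← dotProduct_borderedMatrix_mulVec, ← borderedMatrix_sub_smul] at hslater ⊢
  constructor
  · intro h
    obtain ⟨z₀, hz₀⟩ := hslater
    let φ : (m ⊕ Unit → ℝ) →ₗ[ℝ] ℝ := LinearMap.proj (Sum.inr ())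
    have hmem (w : m ⊕ Unit → ℝ) (hw : φ w = 1) : w = Sum.elim (w ∘ Sum.inl) 1 := by
      ext (_ | _)
      · rfl
      · exact hw
    refine exists_posSemidef_sub_smul_of_affineHyperplane (isSymm_borderedMatrix hA₀ b₀ d₀)
      (isSymm_borderedMatrix hA₁ b₁ d₁) φ ⟨Sum.elim z₀ 1, rfl, hz₀⟩ fun w hw => ?_
    rw [hmem w hw]
    exact h _
  · rintro ⟨c, hc, hpsd⟩ z hz
    have hdiff := hpsd.dotProduct_mulVec_nonneg (Sum.elim z 1)
    rw [star_trivial, dotProduct_sub_smul_mulVec, sub_nonneg] at hdiff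
    exact (mul_nonneg hc hz).trans hdiff

end BorderedMatrices

theorem stmt14_general {m k : Type*} [Fintype m] [Fintype k]
    (P : Matrix m k ℝ) (Qb : Matrix k k ℝ) (hQb : Qb.IsSymm)
    (X : Matrix m m ℝ) (hX : X.IsSymm) (x : m → ℝ) (ξ : ℝ) :
    (∀ ζ ∈ {w : m → ℝ | ∃ z : k → ℝ, z ⬝ᵥ Qb *ᵥ z ≤ 1 ∧ w = P *ᵥ z},
        ζ ⬝ᵥ X *ᵥ ζ + 2 * (x ⬝ᵥ ζ) ≤ ξ) ↔
      (∃ lam : ℝ, 0 ≤ lam ∧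
        (Matrix.fromBlocks (lam • Qb - Pᵀ * X * P)
          (Matrix.of fun i (_ : Unit) => -(Pᵀ *ᵥ x) i)
          (Matrix.of fun (_ : Unit) j => -(Pᵀ *ᵥ x) j)
          (Matrix.of fun _ _ => ξ - lam)).PosSemidef) := by
  have hM : (-(Pᵀ * X * P)).IsSymm := by
    simp [IsSymm, hX.eq, Matrix.mul_assoc]
  have hquad (z : k → ℝ) : z ⬝ᵥ (Pᵀ * X * P) *ᵥ z = (P *ᵥ z) ⬝ᵥ X *ᵥ (P *ᵥ z) := by
    rw [← mulVec_mulVec, ← mulVec_mulVec, dotProduct_mulVec, vecMul_transpose]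
  have hlin (z : k → ℝ) : (Pᵀ *ᵥ x) ⬝ᵥ z = x ⬝ᵥ P *ᵥ z := by
    rw [mulVec_transpose, ← dotProduct_mulVec]
  have hiff := forall_quadratic_nonneg_imp_iff_exists_posSemidef hM hQb.neg
    (-(Pᵀ *ᵥ x)) 0 ξ 1 ⟨0, by simp⟩
  have hblock (lam : ℝ) : -(Pᵀ * X * P) - lam • -Qb = lam • Qb - Pᵀ * X * P := by
    rw [smul_neg, sub_neg_eq_add, neg_add_eq_sub]
  simp only [hblock, smul_zero, sub_zero, mul_one] at hiff
  refine Iff.trans ?_ hiff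
  simp only [Set.mem_ofPred_eq, forall_exists_index, and_imp, neg_mulVec, dotProduct_neg,
    neg_dotProduct, zero_dotProduct, hquad, hlin]
  constructor
  · intro h z hz
    linarith [h _ z (by linarith) rfl]
  · rintro h _ z hz rfl
    linarith [h z (by linarith)]

theorem stmt14 {n nb : ℕ}
    (P : Matrix (Fin n) (Fin nb) ℝ)
    (Qb : Matrix (Fin nb) (Fin nb) ℝ) (hQb : Qb.PosDef)
    (X : Matrix (Fin n) (Fin n) ℝ) (hX : X.IsSymm) (x : Fin n → ℝ) (ξ : ℝ) :
    (∀ ζ ∈ {w : Fin n → ℝ | ∃ z : Fin nb → ℝ, z ⬝ᵥ Qb *ᵥ z ≤ 1 ∧ w = P *ᵥ z},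
        ζ ⬝ᵥ X *ᵥ ζ + 2 * (x ⬝ᵥ ζ) ≤ ξ) ↔
      (∃ lam : ℝ, 0 ≤ lam ∧
        (Matrix.fromBlocks (lam • Qb - Pᵀ * X * P)
          (Matrix.of fun i (_ : Unit) => -(Pᵀ *ᵥ x) i)
          (Matrix.of fun (_ : Unit) j => -(Pᵀ *ᵥ x) j)
          (Matrix.of fun _ _ => ξ - lam)).PosSemidef) :=
  stmt14_general P Qb (isHermitian_iff_isSymm.1 hQb.isHermitian) X hX x ξ
end
end

section
/- Let K ≥ 1 be an integer, S_1,…,S_K symmetric positive semidefinite n̄×n̄ matrices with S_1+⋯+S_K positive definite, and 𝒯 ⊆ ℝ_{≥0}^K a nonempty convex compact monotone set containing a point with all coordinates positive. Let Q be a symmetric n̄×n̄ matrix, q ∈ ℝ^{n̄}, and Q_+ = [[Q, q],[qᵀ, 0]]. Define Opt[1] = inf{ φ_𝒯(λ) + μ : λ ∈ ℝ^K, λ ≥ 0, μ ≥ 0, Q_+ ⪯ BlockDiag(∑_k λ_k S_k, μ) }. Then Opt[1] = max{ Tr(QV) + 2qᵀv : V ∈ S^{n̄}, v ∈ ℝ^{n̄},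 t ∈ 𝒯, Tr(S_k V) ≤ t_k for k = 1,…,K, [[V, v],[vᵀ, 1]] positive semidefinite }, and this maximum is attained. -/
open Matrix BigOperators

noncomputable section

/-- The ellitope `𝒳[s]`: image under `z ↦ P z` of the set of `z` with
`zᵀ S_k z ≤ s t_k` for some `t ∈ 𝒯`. -/
def ellitope {n nb K : ℕ} (P : Matrix (Fin n) (Fin nb) ℝ)
    (S : Fin K → Matrix (Fin nb) (Fin nb) ℝ) (T : Set (Fin K → ℝ)) (s : ℝ) :
    Set (Fin n → ℝ) :=
  {x | ∃ z : Fin nb → ℝ, ∃ t ∈ T, x = P *ᵥ z ∧ ∀ k, z ⬝ᵥ (S k) *ᵥ z ≤ s * t k}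

/-!
`Opt[1]` is the dual of the conic program `max {C x | x ∈ K, A x ∈ B}`, where `K` is the cone of
positive semidefinite matrices `W = [[V, v], [vᵀ, s]]`, `C W = Tr(Q₊ W)`, `A W` consists of the
vector `(Tr(S_k V))_k` and the corner `s`, and `B = (𝒯 + ℝ_{≤0}^K) × {1}`. The support function of
`𝒯 + ℝ_{≤0}^K` is `φ_𝒯` on `λ ≥ 0` and `+∞` elsewhere, which is where `λ ≥ 0` comes from.

For `d` above the optimum, `(0, d)` lies outside the hypograph of the value function
`u ↦ sup {C x | x ∈ K, A x - u ∈ B}`. Positive definiteness of a combination of the constraint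
matrices bounds the feasible `W`, so by compactness the optimum is attained and the hypograph is
closed. A hyperplane separating `(0, d)` from it is not vertical, because some point `(0, r)` lies
in the hypograph, and its slope is a dual feasible `(λ, μ)` of value at most `d`.
-/

theorem nonneg_of_forall_le_add_mul {a b y : ℝ} (h : ∀ τ : ℝ, 0 ≤ τ → a ≤ b + τ * y) :
    0 ≤ y := by
  by_contra! hy
  have hτ := h ((a - b - 1) / y ⊔ 0) le_sup_right
  have := mul_le_mul_of_nonpos_right (le_max_left ((a - b - 1) / y) 0) hy.le
  rw [div_mul_cancel₀ _ hy.ne] at this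
  linarith

theorem isClosed_setOf_exists_mem_of_isCompact {X Y : Type*} [TopologicalSpace X]
    [TopologicalSpace Y] {s : Set X} (hs : IsCompact s) {D : Set (Y × X)} (hD : IsClosed D) :
    IsClosed {p | ∃ x ∈ s, (p, x) ∈ D} := by
  have : CompactSpace s := isCompact_iff_compactSpace.1 hs
  convert isClosedMap_fst_of_compactSpace _
    (hD.preimage (f := fun z : Y × s => (z.1, (z.2 : X))) (by fun_prop)) using 1
  ext p
  simp

section ConicDuality

variable {X F : Type*} [AddCommGroup X] [Module ℝ X] [TopologicalSpace X]
  [AddCommGroup F] [Module ℝ F] [TopologicalSpace F]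

/-- The hypograph of the value function `u ↦ sup {C x | x ∈ K, A x - u ∈ B}` of the conic program
`max {C x | x ∈ K, A x ∈ B}`. -/
def valueHypograph (K : PointedCone ℝ X) (A : X →L[ℝ] F) (B : Set F) (C : StrongDual ℝ X) :
    Set (F × ℝ) :=
  {p | ∃ x ∈ K, A x - p.1 ∈ B ∧ p.2 ≤ C x}

theorem zero_mk_mem_valueHypograph {K : PointedCone ℝ X} {A : X →L[ℝ] F} {B : Set F}
    {C : StrongDual ℝ X} {v : ℝ} :
    ((0 : F), v) ∈ valueHypograph K A B C ↔ ∃ x ∈ K, A x ∈ B ∧ v ≤ C x := by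
  simp [valueHypograph]

theorem convex_valueHypograph (K : PointedCone ℝ X) (A : X →L[ℝ] F) {B : Set F}
    (hB : Convex ℝ B) (C : StrongDual ℝ X) : Convex ℝ (valueHypograph K A B C) := by
  rintro p ⟨x, hx, hxB, hxC⟩ p' ⟨x', hx', hxB', hxC'⟩ a b ha hb hab
  refine ⟨a • x + b • x', K.convex hx hx' ha hb hab, ?_, ?_⟩
  · convert hB hxB hxB' ha hb hab using 1
    simp only [map_add, map_smul, Prod.fst_add, Prod.smul_fst]
    module
  · simp only [map_add, map_smul, Prod.snd_add, Prod.smul_snd, smul_eq_mul]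
    gcongr

theorem isClosed_valueHypograph [IsTopologicalAddGroup F] {K : PointedCone ℝ X} {A : X →L[ℝ] F}
    {B : Set F} (C : StrongDual ℝ X) (hB : IsClosed B) {y : StrongDual ℝ F}
    (hy : BddAbove (y '' B)) (hcomp : ∀ R : ℝ, IsCompact {x | x ∈ K ∧ y (A x) ≤ R}) :
    IsClosed (valueHypograph K A B C) := by
  obtain ⟨β, hβ⟩ := hy
  refine isClosed_of_closure_subset fun p hp => ?_
  set R := y p.1 + 1
  let U : Set (F × ℝ) := {p' | y p'.1 < R}
  let D : Set ((F × ℝ) × X) := {z | A z.2 - z.1.1 ∈ B ∧ z.1.2 ≤ C z.2}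
  have hU : IsOpen U := isOpen_lt (by fun_prop) continuous_const
  have hD : IsClosed D :=
    (hB.preimage (f := fun z : (F × ℝ) × X => A z.2 - z.1.1) (by fun_prop)).inter
      (isClosed_le (by fun_prop : Continuous fun z : (F × ℝ) × X => z.1.2) (by fun_prop))
  have hsub : U ∩ valueHypograph K A B C ⊆
      {p' | ∃ x ∈ {x | x ∈ K ∧ y (A x) ≤ β + R}, (p', x) ∈ D} := by
    rintro p' ⟨hpU : y p'.1 < R, x, hxK, hxB, hxC⟩
    have hyx := hβ (Set.mem_image_of_mem y hxB)
    rw [map_sub] at hyx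
    exact ⟨x, ⟨hxK, by linarith⟩, hxB, hxC⟩
  have hpU : p ∈ closure (U ∩ valueHypograph K A B C) :=
    hU.inter_closure ⟨lt_add_one (y p.1), hp⟩
  obtain ⟨x, hx, hxB, hxC⟩ :=
    closure_minimal hsub (isClosed_setOf_exists_mem_of_isCompact (hcomp (β + R)) hD) hpU
  exact ⟨x, hx.1, hxB, hxC⟩

theorem exists_forall_mem_snd_lt_add [IsTopologicalAddGroup F] [ContinuousSMul ℝ F]
    [LocallyConvexSpace ℝ F] {s : Set (F × ℝ)} (hconv : Convex ℝ s) (hclosed : IsClosed s)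
    {r d : ℝ} (hrd : r < d) (hr : (0, r) ∈ s) (hd : (0, d) ∉ s) :
    ∃ y : StrongDual ℝ F, ∀ p ∈ s, p.2 < d + y p.1 := by
  obtain ⟨f, a, hfd, hf⟩ := geometric_hahn_banach_point_closed hconv hclosed hd
  set ρ := f (0, 1)
  have hsplit (u : F) (v : ℝ) : f (u, v) = f (u, 0) + v * ρ := by
    rw [← smul_eq_mul, ← map_smul, ← map_add]
    simp
  have hzero (v : ℝ) : f (0, v) = v * ρ := by simp [hsplit 0 v, ← Prod.zero_eq_mk]
  have hρ : ρ < 0 := by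
    have := hfd.trans (hf _ hr)
    rw [hzero, hzero] at this
    nlinarith
  refine ⟨(-ρ)⁻¹ • f.comp (.inl ℝ F ℝ), fun p hp => ?_⟩
  have hsep := hfd.trans (hf p hp)
  rw [hzero, hsplit p.1 p.2] at hsep
  rw [_root_.smul_apply, smul_eq_mul, ← sub_lt_iff_lt_add', ← div_eq_inv_mul,
    lt_div_iff₀ (neg_pos.2 hρ), ContinuousLinearMap.comp_apply, ContinuousLinearMap.inl_apply]
  linarith

theorem exists_dual_lt [IsTopologicalAddGroup F] [ContinuousSMul ℝ F] [LocallyConvexSpace ℝ F]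
    {K : PointedCone ℝ X} {A : X →L[ℝ] F} {B : Set F} {C : StrongDual ℝ X} (hB : Convex ℝ B)
    (hclosed : IsClosed (valueHypograph K A B C)) (hfeas : ∃ x ∈ K, A x ∈ B) {d : ℝ}
    (hd : ∀ x ∈ K, A x ∈ B → C x < d) :
    ∃ y : StrongDual ℝ F, (∀ x ∈ K, C x ≤ y (A x)) ∧ ∀ b ∈ B, y b < d := by
  obtain ⟨x₀, hx₀, hx₀B⟩ := hfeas
  obtain ⟨y, hy⟩ := exists_forall_mem_snd_lt_add (convex_valueHypograph K A hB C) hclosed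
    (hd x₀ hx₀ hx₀B) (zero_mk_mem_valueHypograph.2 ⟨x₀, hx₀, hx₀B, le_rfl⟩) fun hmem => by
      obtain ⟨x, hx, hxB, hdx⟩ := zero_mk_mem_valueHypograph.1 hmem
      exact hdx.not_gt (hd x hx hxB)
  have hlag (x) (hx : x ∈ K) (b) (hb : b ∈ B) : C x < d + (y (A x) - y b) := by
    simpa using hy (A x - b, C x) ⟨x, hx, by simpa using hb, le_rfl⟩
  refine ⟨y, fun x hx => ?_, fun b hb => by simpa using hlag 0 K.zero_mem b hb⟩
  refine sub_nonneg.1 (nonneg_of_forall_le_add_mul (a := y (A x₀)) (b := d) fun τ hτ => ?_)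
  have := hlag (τ • x) (K.smul_mem hτ hx) _ hx₀B
  simp only [map_smul, smul_eq_mul] at this
  linarith

theorem exists_isMaxOn_conicProgram {K : PointedCone ℝ X} {A : X →L[ℝ] F} {B : Set F}
    (C : StrongDual ℝ X) (hB : IsClosed B) {y₀ : StrongDual ℝ F} (hy₀ : BddAbove (y₀ '' B))
    (hcomp : ∀ R : ℝ, IsCompact {x | x ∈ K ∧ y₀ (A x) ≤ R}) (hfeas : ∃ x ∈ K, A x ∈ B) :
    ∃ x ∈ K, A x ∈ B ∧ ∀ x' ∈ K, A x' ∈ B → C x' ≤ C x := by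
  obtain ⟨β, hβ⟩ := hy₀
  have hcompact : IsCompact ({x | x ∈ K ∧ y₀ (A x) ≤ β} ∩ A ⁻¹' B) :=
    (hcomp β).inter_right (hB.preimage A.continuous)
  have hmem {x : X} (hx : x ∈ K) (hxB : A x ∈ B) : x ∈ {x | x ∈ K ∧ y₀ (A x) ≤ β} ∩ A ⁻¹' B :=
    ⟨⟨hx, hβ (Set.mem_image_of_mem _ hxB)⟩, hxB⟩
  obtain ⟨x₀, hx₀, hx₀B⟩ := hfeas
  obtain ⟨x, hx, hmax⟩ := hcompact.exists_isMaxOn ⟨x₀, hmem hx₀ hx₀B⟩ C.continuous.continuousOn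
  exact ⟨x, hx.1.1, hx.2, fun x' hx' hxB' => hmax (hmem hx' hxB')⟩

-- `IsLUB` instead of `v = sSup _` excludes the `y` at which the support function of `B` is `+∞`.
theorem isGreatest_sInf_dual [IsTopologicalAddGroup F] [ContinuousSMul ℝ F]
    [LocallyConvexSpace ℝ F] {K : PointedCone ℝ X} {A : X →L[ℝ] F} {B : Set F}
    (C : StrongDual ℝ X) (hconv : Convex ℝ B) (hclosed : IsClosed B) {y₀ : StrongDual ℝ F}
    (hy₀ : BddAbove (y₀ '' B)) (hcomp : ∀ R : ℝ, IsCompact {x | x ∈ K ∧ y₀ (A x) ≤ R})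
    (hfeas : ∃ x ∈ K, A x ∈ B) :
    IsGreatest {v | ∃ x ∈ K, A x ∈ B ∧ v = C x}
      (sInf {v | ∃ y : StrongDual ℝ F, (∀ x ∈ K, C x ≤ y (A x)) ∧ IsLUB (y '' B) v}) := by
  obtain ⟨x₁, hx₁, hx₁B, hmax⟩ := exists_isMaxOn_conicProgram C hclosed hy₀ hcomp hfeas
  have hweak {y : StrongDual ℝ F} (hyC : ∀ x ∈ K, C x ≤ y (A x)) {v : ℝ}
      (hlub : IsLUB (y '' B) v) : C x₁ ≤ v :=
    (hyC x₁ hx₁).trans (hlub.1 (Set.mem_image_of_mem y hx₁B))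
  have hstrong (d : ℝ) (hd : C x₁ < d) : ∃ y : StrongDual ℝ F,
      (∀ x ∈ K, C x ≤ y (A x)) ∧ ∃ v ≤ d, IsLUB (y '' B) v := by
    obtain ⟨y, hyC, hyd⟩ := exists_dual_lt hconv
      (isClosed_valueHypograph C hclosed hy₀ hcomp) hfeas
      fun x hx hxB => (hmax x hx hxB).trans_lt hd
    have hub : d ∈ upperBounds (y '' B) := Set.forall_mem_image.2 fun b hb => (hyd b hb).le
    have hlub := isLUB_csSup (Set.image_nonempty.2 ⟨_, hx₁B⟩) ⟨d, hub⟩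
    exact ⟨y, hyC, _, hlub.2 hub, hlub⟩
  have hvalue : sInf {v | ∃ y : StrongDual ℝ F, (∀ x ∈ K, C x ≤ y (A x)) ∧ IsLUB (y '' B) v}
      = C x₁ := by
    refine csInf_eq_of_forall_ge_of_forall_gt_exists_lt ?_ ?_ fun d hd => ?_
    · obtain ⟨y, hyC, v, -, hlub⟩ := hstrong _ (lt_add_one _)
      exact ⟨v, y, hyC, hlub⟩
    · rintro v ⟨y, hyC, hlub⟩
      exact hweak hyC hlub
    · obtain ⟨d', hd', hdd'⟩ := exists_between hd
      obtain ⟨y, hyC, v, hvd, hlub⟩ := hstrong d' hd'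
      exact ⟨v, ⟨y, hyC, hlub⟩, hvd.trans_lt hdd'⟩
  rw [hvalue]
  refine ⟨⟨x₁, hx₁, hx₁B, rfl⟩, ?_⟩
  rintro _ ⟨x, hx, hxB, rfl⟩
  exact hmax x hx hxB

end ConicDuality

section PosSemidef

open scoped ComplexOrder

variable {𝕜 n : Type*} [RCLike 𝕜] [Fintype n]

theorem trace_mul_nonneg_of_posSemidef_s15 {A B : Matrix n n 𝕜} (hA : A.PosSemidef)
    (hB : B.PosSemidef) : 0 ≤ (A * B).trace := by
  obtain ⟨m, a, rfl⟩ := Matrix.posSemidef_iff_eq_sum_vecMulVec.mp hB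
  rw [Finset.mul_sum, trace_sum]
  refine Finset.sum_nonneg fun i _ => ?_
  rw [mul_vecMulVec, trace_vecMulVec, dotProduct_comm]
  exact hA.dotProduct_mulVec_nonneg (a i)

theorem posSemidef_iff_forall_trace_mul_nonneg_s15 {A : Matrix n n 𝕜} (hA : A.IsHermitian) :
    A.PosSemidef ↔ ∀ W : Matrix n n 𝕜, W.PosSemidef → 0 ≤ (A * W).trace := by
  refine ⟨fun hA W hW => trace_mul_nonneg_of_posSemidef_s15 hA hW, fun h => ?_⟩
  refine .of_dotProduct_mulVec_nonneg hA fun x => ?_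
  have hx := h _ (posSemidef_vecMulVec_self_star x)
  rwa [mul_vecMulVec, trace_vecMulVec, dotProduct_comm] at hx

theorem isClosed_setOf_posSemidef {n : Type*} [Finite n] :
    IsClosed {A : Matrix n n 𝕜 | A.PosSemidef} := by
  have := Fintype.ofFinite n
  simp only [posSemidef_iff_dotProduct_mulVec, Set.ofPred_and, Set.ofPred_forall]
  refine .inter (isClosed_eq (by fun_prop) continuous_id) (isClosed_iInter fun x => ?_)
  exact isClosed_le continuous_const (by fun_prop)

open scoped MatrixOrder in
theorem exists_pos_posSemidef_sub_smul_one {n : Type*} [Finite n] [DecidableEq n]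
    {A : Matrix n n 𝕜} (hA : A.PosDef) :
    ∃ r > (0 : ℝ), (A - r • (1 : Matrix n n 𝕜)).PosSemidef := by
  have := Fintype.ofFinite n
  rcases isEmpty_or_nonempty n with h | h
  · exact ⟨1, one_pos, by rw [Subsingleton.elim (A - (1 : ℝ) • 1) 0]; exact .zero⟩
  obtain ⟨r, hr, h⟩ := (CFC.exists_pos_algebraMap_le_iff hA.isHermitian).2
    fun x hx => (isStrictlyPositive_iff_posDef.2 hA).spectrum_pos hx
  exact ⟨r, hr, by rwa [Algebra.algebraMap_eq_smul_one, Matrix.le_iff] at h⟩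

theorem abs_apply_le_trace_of_posSemidef {A : Matrix n n ℝ} (hA : A.PosSemidef) (i j : n) :
    |A i j| ≤ A.trace := by
  classical
  have hdiag (k : n) : A k k ≤ A.trace :=
    Finset.single_le_sum (f := fun k => A k k) (fun l _ => hA.diag_nonneg) (Finset.mem_univ k)
  have hsymm : A j i = A i j := hA.isHermitian.apply i j
  have hadd := hA.dotProduct_mulVec_nonneg (Pi.single i 1 + Pi.single j 1)
  have hsub := hA.dotProduct_mulVec_nonneg (Pi.single i 1 - Pi.single j 1)
  simp only [star_trivial, mulVec_add, mulVec_sub, mulVec_single, MulOpposite.op_one, one_smul,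
    dotProduct_add, dotProduct_sub, add_dotProduct, sub_dotProduct, single_dotProduct, col_apply,
    one_mul] at hadd hsub
  rw [abs_le]
  constructor <;> linarith [hdiag i, hdiag j]

theorem isCompact_setOf_posSemidef_trace_mul_le {P : Matrix n n ℝ} (hP : P.PosDef) (R : ℝ) :
    IsCompact {W : Matrix n n ℝ | W.PosSemidef ∧ (P * W).trace ≤ R} := by
  classical
  obtain ⟨r, hr, hPr⟩ := exists_pos_posSemidef_sub_smul_one hP
  have hbox : IsCompact {W : Matrix n n ℝ | ∀ i, W i ∈
      {v : n → ℝ | ∀ j, v j ∈ Set.Icc (-(R / r)) (R / r)}} :=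
    isCompact_pi_infinite fun _ => isCompact_pi_infinite fun _ => isCompact_Icc
  refine hbox.of_isClosed_subset ?_ ?_
  · exact isClosed_setOf_posSemidef.inter
      (isClosed_le (f := fun W : Matrix n n ℝ => (P * W).trace) (by fun_prop) continuous_const)
  · rintro W ⟨hW, hWR⟩ i j
    have htrace : W.trace ≤ R / r := by
      have h := trace_mul_nonneg_of_posSemidef_s15 hPr hW
      rw [sub_mul, trace_sub, smul_mul, one_mul, trace_smul, smul_eq_mul] at h
      rw [le_div_iff₀ hr]
      linarith
    exact abs_le.1 ((abs_apply_le_trace_of_posSemidef hW i j).trans htrace)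

end PosSemidef

section SupportFunction

open scoped Pointwise

variable {ι : Type*} [Fintype ι]

/-- The continuous linear functional `(u, s) ↦ ⟨lam, u⟩ + μ s` on `ℝ^ι × ℝ`. -/
def dualPairing (lam : ι → ℝ) (μ : ℝ) : StrongDual ℝ ((ι → ℝ) × ℝ) :=
  LinearMap.toContinuousLinearMap
    ((dotProductBilin ℝ ℝ lam).coprod (μ • LinearMap.id))

@[simp]
theorem dualPairing_apply (lam : ι → ℝ) (μ : ℝ) (p : (ι → ℝ) × ℝ) :
    dualPairing lam μ p = lam ⬝ᵥ p.1 + μ * p.2 := by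
  simp [dualPairing]

theorem exists_eq_dualPairing (y : StrongDual ℝ ((ι → ℝ) × ℝ)) :
    ∃ lam μ, y = dualPairing lam μ := by
  classical
  refine ⟨(dotProductEquiv ℝ ι).symm (y.comp (.inl ℝ _ ℝ)).toLinearMap, y (0, 1), ?_⟩
  ext p
  · have h := LinearMap.congr_fun
      ((dotProductEquiv ℝ ι).apply_symm_apply (y.comp (.inl ℝ _ ℝ)).toLinearMap) p
    simpa only [dotProductEquiv_apply_apply, dualPairing_apply, mul_zero, add_zero,
      ContinuousLinearMap.coe_coe, ContinuousLinearMap.comp_apply,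
      ContinuousLinearMap.inl_apply] using h.symm
  · simp

theorem nonneg_of_mem_upperBounds_dualPairing {T : Set (ι → ℝ)} (hT : T.Nonempty)
    {lam : ι → ℝ} {μ b v : ℝ}
    (hv : v ∈ upperBounds (dualPairing lam μ '' ((T + Set.Iic 0) ×ˢ {b}))) (k : ι) :
    0 ≤ lam k := by
  classical
  obtain ⟨t, ht⟩ := hT
  refine nonneg_of_forall_le_add_mul (a := lam ⬝ᵥ t + μ * b) (b := v) fun τ hτ => ?_
  have hmem : (t + Pi.single k (-τ), b) ∈ (T + Set.Iic 0) ×ˢ {b} :=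
    ⟨Set.add_mem_add ht (Pi.single_nonpos.2 (neg_nonpos.2 hτ)), rfl⟩
  have := hv (Set.mem_image_of_mem _ hmem)
  simp only [dualPairing_apply, dotProduct_add, dotProduct_single, mul_neg] at this
  linarith

theorem isLUB_suppFn_s15 {K : ℕ} {T : Set (Fin K → ℝ)} (hne : T.Nonempty) (hT : IsCompact T)
    (lam : Fin K → ℝ) : IsLUB ((lam ⬝ᵥ ·) '' T) (suppFn T lam) :=
  isLUB_csSup (hne.image _) (hT.image (by fun_prop)).bddAbove

theorem isLUB_image_dualPairing {K : ℕ} {T : Set (Fin K → ℝ)} (hne : T.Nonempty)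
    (hT : IsCompact T) {lam : Fin K → ℝ} (hlam : 0 ≤ lam) (μ b : ℝ) :
    IsLUB (dualPairing lam μ '' ((T + Set.Iic 0) ×ˢ {b})) (suppFn T lam + μ * b) := by
  have hlub := isLUB_suppFn_s15 hne hT lam
  constructor
  · rintro _ ⟨⟨_, _⟩, ⟨⟨t, ht, d, hd, rfl⟩, rfl⟩, rfl⟩
    have hle : lam ⬝ᵥ d ≤ lam ⬝ᵥ 0 := dotProduct_le_dotProduct_of_nonneg_left hd hlam
    have := hlub.1 (Set.mem_image_of_mem _ ht)
    simp only [dotProduct_zero, dualPairing_apply, dotProduct_add] at this hle ⊢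
    linarith
  · refine fun v hv => le_sub_iff_add_le.1 (hlub.2 ?_)
    rintro _ ⟨t, ht, rfl⟩
    have hmem : (t, b) ∈ (T + Set.Iic 0) ×ˢ {b} :=
      ⟨⟨t, ht, 0, Set.self_mem_Iic, add_zero t⟩, rfl⟩
    simpa [le_sub_iff_add_le] using hv (Set.mem_image_of_mem _ hmem)

theorem isLUB_image_dualPairing_iff {K : ℕ} {T : Set (Fin K → ℝ)} (hne : T.Nonempty)
    (hT : IsCompact T) {lam : Fin K → ℝ} {μ b v : ℝ} :
    IsLUB (dualPairing lam μ '' ((T + Set.Iic 0) ×ˢ {b})) v ↔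
      (∀ k, 0 ≤ lam k) ∧ v = suppFn T lam + μ * b := by
  constructor
  · intro hv
    have hlam : ∀ k, 0 ≤ lam k := nonneg_of_mem_upperBounds_dualPairing hne hv.1
    exact ⟨hlam, hv.unique (isLUB_image_dualPairing hne hT hlam μ b)⟩
  · rintro ⟨hlam, rfl⟩
    exact isLUB_image_dualPairing hne hT hlam μ b

end SupportFunction

section SemidefiniteDuality

open scoped Pointwise

variable {ι n : Type*}

variable (n) in
/-- The cone of positive semidefinite real matrices. -/
def posSemidefCone : PointedCone ℝ (Matrix n n ℝ) where
  carrier := {W | W.PosSemidef}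
  add_mem' := .add
  zero_mem' := .zero
  smul_mem' c _ hW := hW.smul c.2

@[simp]
theorem mem_posSemidefCone {W : Matrix n n ℝ} : W ∈ posSemidefCone n ↔ W.PosSemidef := Iff.rfl

variable [Fintype n]

/-- The functional `W ↦ Tr(M W)`. -/
def traceMulLeft (M : Matrix n n ℝ) : StrongDual ℝ (Matrix n n ℝ) :=
  LinearMap.toContinuousLinearMap (traceLinearMap n ℝ ℝ ∘ₗ LinearMap.mulLeft ℝ M)

@[simp]
theorem traceMulLeft_apply (M W : Matrix n n ℝ) : traceMulLeft M W = (M * W).trace := rfl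

/-- The constraint map `W ↦ ((Tr(M_k W))_k, Tr(E W))` of a semidefinite program. -/
def traceConstraints (M : ι → Matrix n n ℝ) (E : Matrix n n ℝ) :
    Matrix n n ℝ →L[ℝ] (ι → ℝ) × ℝ :=
  (ContinuousLinearMap.pi fun k => traceMulLeft (M k)).prod (traceMulLeft E)

theorem dualPairing_traceConstraints [Fintype ι] (M : ι → Matrix n n ℝ) (E W : Matrix n n ℝ)
    (lam : ι → ℝ) (μ : ℝ) :
    dualPairing lam μ (traceConstraints M E W) = ((∑ k, lam k • M k + μ • E) * W).trace := by
  simp [traceConstraints, dotProduct, add_mul, Finset.sum_mul, trace_sum]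

theorem traceConstraints_mem_iff {M : ι → Matrix n n ℝ} {E W : Matrix n n ℝ}
    {T : Set (ι → ℝ)} {b : ℝ} :
    traceConstraints M E W ∈ (T + Set.Iic 0) ×ˢ {b} ↔
      ∃ t ∈ T, (∀ k, (M k * W).trace ≤ t k) ∧ (E * W).trace = b := by
  simp only [traceConstraints, Set.mem_prod, Set.mem_add]
  constructor
  · rintro ⟨⟨t, ht, d, hd, hsum⟩, hE⟩
    refine ⟨t, ht, fun k => ?_, hE⟩
    exact (congrFun hsum k).symm.trans_le (add_le_of_nonpos_right (hd k))
  · rintro ⟨t, ht, hM, hE⟩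
    exact ⟨⟨t, ht, _, fun k => sub_nonpos.2 (hM k), add_sub_cancel _ _⟩, hE⟩

theorem posSemidef_sum_smul_add_smul_sub_iff [Fintype ι] {M : ι → Matrix n n ℝ}
    {E C : Matrix n n ℝ} (hM : ∀ k, (M k).IsHermitian) (hE : E.IsHermitian) (hC : C.IsHermitian)
    (lam : ι → ℝ) (μ : ℝ) :
    (∑ k, lam k • M k + μ • E - C).PosSemidef ↔ ∀ W ∈ posSemidefCone n,
      traceMulLeft C W ≤ dualPairing lam μ (traceConstraints M E W) := by
  have hherm : (∑ k, lam k • M k + μ • E - C).IsHermitian := by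
    refine .sub (.add ?_ (hE.smul (.all _))) hC
    exact isSelfAdjoint_sum _ fun k _ => (hM k).smul (.all _)
  simp only [posSemidef_iff_forall_trace_mul_nonneg_s15 hherm, mem_posSemidefCone, sub_mul _ C,
    trace_sub, sub_nonneg, dualPairing_traceConstraints, traceMulLeft_apply]

theorem isGreatest_sInf_semidefinite_dual {K : ℕ} {M : Fin K → Matrix n n ℝ}
    {E C : Matrix n n ℝ} (hM : ∀ k, (M k).IsHermitian) (hE : E.IsHermitian)
    (hC : C.IsHermitian)
    (hpos : ∃ lam : Fin K → ℝ, ∃ μ : ℝ, (∀ k, 0 ≤ lam k) ∧ (∑ k, lam k • M k + μ • E).PosDef)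
    {T : Set (Fin K → ℝ)} (hTconv : Convex ℝ T) (hTcomp : IsCompact T) {b : ℝ}
    (hfeas : ∃ W : Matrix n n ℝ, W.PosSemidef ∧
      ∃ t ∈ T, (∀ k, (M k * W).trace ≤ t k) ∧ (E * W).trace = b) :
    IsGreatest
      {v : ℝ | ∃ W : Matrix n n ℝ, W.PosSemidef ∧
        (∃ t ∈ T, (∀ k, (M k * W).trace ≤ t k) ∧ (E * W).trace = b) ∧ v = (C * W).trace}
      (sInf {v : ℝ | ∃ lam : Fin K → ℝ, ∃ μ : ℝ, (∀ k, 0 ≤ lam k) ∧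
        (∑ k, lam k • M k + μ • E - C).PosSemidef ∧ v = suppFn T lam + μ * b}) := by
  have hTne : T.Nonempty := let ⟨_, _, t, ht, _⟩ := hfeas; ⟨t, ht⟩
  obtain ⟨lam₀, μ₀, hlam₀, hpos⟩ := hpos
  have hcomp (R : ℝ) : IsCompact {W | W ∈ posSemidefCone n ∧
      dualPairing lam₀ μ₀ (traceConstraints M E W) ≤ R} := by
    simpa only [dualPairing_traceConstraints, mem_posSemidefCone] using
      isCompact_setOf_posSemidef_trace_mul_le hpos R
  have hdual := isGreatest_sInf_dual (traceMulLeft C)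
    ((hTconv.add (convex_Iic 0)).prod (convex_singleton b))
    ((isClosed_Iic.add_left_of_isCompact hTcomp).prod isClosed_singleton)
    (isLUB_image_dualPairing hTne hTcomp hlam₀ μ₀ b).bddAbove hcomp
    (by simpa only [traceConstraints_mem_iff, mem_posSemidefCone] using hfeas)
  convert hdual using 1
  · simp only [traceConstraints_mem_iff, mem_posSemidefCone, traceMulLeft_apply]
  · congr 1
    ext v
    constructor
    · rintro ⟨lam, μ, hlam, hpsd, rfl⟩
      exact ⟨dualPairing lam μ, (posSemidef_sum_smul_add_smul_sub_iff hM hE hC lam μ).1 hpsd,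
        isLUB_image_dualPairing hTne hTcomp hlam μ b⟩
    · rintro ⟨y, hy, hlub⟩
      obtain ⟨lam, μ, rfl⟩ := exists_eq_dualPairing y
      obtain ⟨hlam, rfl⟩ := (isLUB_image_dualPairing_iff hTne hTcomp).1 hlub
      exact ⟨lam, μ, hlam, (posSemidef_sum_smul_add_smul_sub_iff hM hE hC lam μ).2 hy, rfl⟩

end SemidefiniteDuality

section BlockMatrices

variable {m : ℕ}

theorem isHermitian_blockDiagOne {M : Matrix (Fin m) (Fin m) ℝ} (hM : M.IsHermitian) (μ : ℝ) :
    (blockDiagOne M μ).IsHermitian :=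
  hM.fromBlocks (by simp) (by ext; simp)

theorem isHermitian_qPlus {Q : Matrix (Fin m) (Fin m) ℝ} (hQ : Q.IsHermitian) (q : Fin m → ℝ) :
    (qPlus Q q).IsHermitian :=
  hQ.fromBlocks (by ext; simp) (by simp)

theorem dotProduct_blockDiagOne_mulVec (M : Matrix (Fin m) (Fin m) ℝ) (μ : ℝ)
    (x : Fin m ⊕ Unit → ℝ) :
    x ⬝ᵥ blockDiagOne M μ *ᵥ x =
      (x ∘ Sum.inl) ⬝ᵥ M *ᵥ (x ∘ Sum.inl) + μ * x (Sum.inr ()) ^ 2 := by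
  rw [blockDiagOne, fromBlocks_mulVec]
  simp only [dotProduct, zero_mulVec, add_zero, zero_add, Fintype.sum_sum_type, Sum.elim_inl,
    mulVec, Function.comp_apply, Finset.univ_unique, PUnit.default_eq_unit, Sum.elim_inr, of_apply,
    Finset.sum_singleton]
  ring

theorem posSemidef_blockDiagOne {M : Matrix (Fin m) (Fin m) ℝ} (hM : M.PosSemidef) {μ : ℝ}
    (hμ : 0 ≤ μ) : (blockDiagOne M μ).PosSemidef := by
  refine .of_dotProduct_mulVec_nonneg (isHermitian_blockDiagOne hM.isHermitian μ) fun x => ?_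
  rw [star_trivial, dotProduct_blockDiagOne_mulVec]
  have := hM.dotProduct_mulVec_nonneg (x ∘ Sum.inl)
  rw [star_trivial] at this
  positivity

theorem posDef_blockDiagOne {M : Matrix (Fin m) (Fin m) ℝ} (hM : M.PosDef) {μ : ℝ}
    (hμ : 0 < μ) : (blockDiagOne M μ).PosDef := by
  refine (posSemidef_blockDiagOne hM.posSemidef hμ.le).posDef_iff_det_ne_zero.2 ?_
  rw [blockDiagOne, det_fromBlocks_zero₂₁]
  refine mul_ne_zero (hM.posSemidef.posDef_iff_det_ne_zero.1 hM) ?_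
  simpa using hμ.ne'

theorem sum_smul_blockDiagOne {ι : Type*} [Fintype ι] (S : ι → Matrix (Fin m) (Fin m) ℝ)
    (lam : ι → ℝ) (μ : ℝ) :
    ∑ k, lam k • blockDiagOne (S k) 0 + μ • blockDiagOne 0 1 =
      blockDiagOne (∑ k, lam k • S k) μ := by
  ext (i | i) (j | j) <;> simp [blockDiagOne, Matrix.sum_apply]

theorem nonneg_of_posSemidef_blockDiagOne_sub_qPlus {M Q : Matrix (Fin m) (Fin m) ℝ} {μ : ℝ}
    {q : Fin m → ℝ} (h : (blockDiagOne M μ - qPlus Q q).PosSemidef) : 0 ≤ μ := by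
  simpa [blockDiagOne, qPlus] using h.diag_nonneg (i := Sum.inr ())

theorem trace_blockDiagOne_mul (M : Matrix (Fin m) (Fin m) ℝ) (μ : ℝ)
    (W : Matrix (Fin m ⊕ Unit) (Fin m ⊕ Unit) ℝ) :
    (blockDiagOne M μ * W).trace = (M * W.toBlocks₁₁).trace + μ * W (Sum.inr ()) (Sum.inr ()) := by
  simp [blockDiagOne, trace, mul_apply, toBlocks₁₁]

theorem trace_qPlus_mul (Q : Matrix (Fin m) (Fin m) ℝ) (q : Fin m → ℝ)
    {W : Matrix (Fin m ⊕ Unit) (Fin m ⊕ Unit) ℝ} (hW : W.IsHermitian) :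
    (qPlus Q q * W).trace =
      (Q * W.toBlocks₁₁).trace + 2 * (q ⬝ᵥ fun i => W (Sum.inl i) (Sum.inr ())) := by
  have hsymm (i : Fin m) : W (Sum.inr ()) (Sum.inl i) = W (Sum.inl i) (Sum.inr ()) :=
    hW.apply _ _
  simp only [trace, qPlus, diag_apply, mul_apply, Fintype.sum_sum_type, Finset.univ_unique,
    PUnit.default_eq_unit, Finset.sum_singleton, Finset.sum_add_distrib, fromBlocks_apply₁₁,
    fromBlocks_apply₂₁, of_apply, fromBlocks_apply₁₂, hsymm, fromBlocks_apply₂₂,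
    Matrix.zero_apply, zero_mul, add_zero, toBlocks₁₁, dotProduct]
  ring

/-- The matrix `[[V, w], [wᵀ, 1]]`. -/
def borderOne (V : Matrix (Fin m) (Fin m) ℝ) (w : Fin m → ℝ) :
    Matrix (Fin m ⊕ Unit) (Fin m ⊕ Unit) ℝ :=
  Matrix.fromBlocks V (Matrix.of fun i _ => w i) (Matrix.of fun _ j => w j)
    (Matrix.of fun _ _ => 1)

theorem eq_borderOne {W : Matrix (Fin m ⊕ Unit) (Fin m ⊕ Unit) ℝ} (hW : W.IsHermitian)
    (hone : W (Sum.inr ()) (Sum.inr ()) = 1) :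
    W = borderOne W.toBlocks₁₁ fun i => W (Sum.inl i) (Sum.inr ()) := by
  ext (i | i) (j | j)
  · rfl
  · rfl
  · exact (hW.apply _ _).symm
  · exact hone

theorem exists_posSemidef_borderOne_iff {K : ℕ} (S : Fin K → Matrix (Fin m) (Fin m) ℝ)
    (T : Set (Fin K → ℝ)) (Q : Matrix (Fin m) (Fin m) ℝ) (q : Fin m → ℝ) (v : ℝ) :
    (∃ V : Matrix (Fin m) (Fin m) ℝ, ∃ w : Fin m → ℝ, ∃ t ∈ T, V.IsSymm ∧
      (∀ k, (S k * V).trace ≤ t k) ∧ (borderOne V w).PosSemidef ∧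
      v = (Q * V).trace + 2 * (q ⬝ᵥ w)) ↔
    ∃ W : Matrix (Fin m ⊕ Unit) (Fin m ⊕ Unit) ℝ, W.PosSemidef ∧
      (∃ t ∈ T, (∀ k, (blockDiagOne (S k) 0 * W).trace ≤ t k) ∧
        (blockDiagOne 0 1 * W).trace = 1) ∧ v = (qPlus Q q * W).trace := by
  simp only [trace_blockDiagOne_mul, zero_mul, add_zero, trace_zero, one_mul,
    zero_add]
  constructor
  · rintro ⟨V, w, t, ht, -, hS, hW, rfl⟩
    exact ⟨borderOne V w, hW, ⟨t, ht, hS, rfl⟩, (trace_qPlus_mul Q q hW.isHermitian).symm⟩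
  · rintro ⟨W, hW, ⟨t, ht, hS, hone⟩, rfl⟩
    exact ⟨W.toBlocks₁₁, fun i => W (Sum.inl i) (Sum.inr ()), t, ht,
      (hW.submatrix Sum.inl).isHermitian, hS, eq_borderOne hW.isHermitian hone ▸ hW,
      trace_qPlus_mul Q q hW.isHermitian⟩

end BlockMatrices

theorem stmt15_general {nb K : ℕ} {S : Fin K → Matrix (Fin nb) (Fin nb) ℝ}
    (hS : ∀ k, (S k).IsSymm)
    (hSpos : ∃ lam : Fin K → ℝ, (∀ k, 0 ≤ lam k) ∧ (∑ k, lam k • S k).PosDef)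
    {T : Set (Fin K → ℝ)} (hTconv : Convex ℝ T) (hTcomp : IsCompact T)
    (hfeas : ∃ V : Matrix (Fin nb) (Fin nb) ℝ, V.PosSemidef ∧
      ∃ t ∈ T, ∀ k, (S k * V).trace ≤ t k)
    {Q : Matrix (Fin nb) (Fin nb) ℝ} (hQ : Q.IsSymm) (q : Fin nb → ℝ) :
    IsGreatest
      {v : ℝ | ∃ V : Matrix (Fin nb) (Fin nb) ℝ, ∃ w : Fin nb → ℝ, ∃ t ∈ T,
        V.IsSymm ∧ (∀ k, (S k * V).trace ≤ t k) ∧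
        (Matrix.fromBlocks V (Matrix.of fun i (_ : Unit) => w i)
          (Matrix.of fun (_ : Unit) j => w j)
          (Matrix.of fun _ _ => (1 : ℝ))).PosSemidef ∧
        v = (Q * V).trace + 2 * (q ⬝ᵥ w)}
      (sInf {v : ℝ | ∃ lam : Fin K → ℝ, ∃ μ : ℝ,
        (∀ k, 0 ≤ lam k) ∧ 0 ≤ μ ∧
        (blockDiagOne (∑ k, lam k • S k) μ - qPlus Q q).PosSemidef ∧
        v = suppFn T lam + μ}) := by
  obtain ⟨lam₀, hlam₀, hpos⟩ := hSpos
  obtain ⟨V, hV, t, ht, hVt⟩ := hfeas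
  have hduality := isGreatest_sInf_semidefinite_dual
    (fun k => isHermitian_blockDiagOne (hS k) 0) (isHermitian_blockDiagOne isHermitian_zero 1)
    (isHermitian_qPlus hQ q)
    ⟨lam₀, 1, hlam₀, sum_smul_blockDiagOne S lam₀ 1 ▸ posDef_blockDiagOne hpos one_pos⟩
    hTconv hTcomp (b := 1)
    ⟨blockDiagOne V 1, posSemidef_blockDiagOne hV zero_le_one, t, ht,
      fun k => by rw [trace_blockDiagOne_mul]; simpa [blockDiagOne] using hVt k,
      by rw [trace_blockDiagOne_mul]; simp [blockDiagOne]⟩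
  simp only [sum_smul_blockDiagOne, mul_one, ← exists_posSemidef_borderOne_iff] at hduality
  have hdrop (lam : Fin K → ℝ) (μ v : ℝ) :
      (0 ≤ μ ∧ (blockDiagOne (∑ k, lam k • S k) μ - qPlus Q q).PosSemidef ∧
        v = suppFn T lam + μ) ↔
      (blockDiagOne (∑ k, lam k • S k) μ - qPlus Q q).PosSemidef ∧ v = suppFn T lam + μ :=
    and_iff_right_of_imp fun h => nonneg_of_posSemidef_blockDiagOne_sub_qPlus h.1
  simp only [hdrop]
  exact hduality

theorem stmt15 {nb K : ℕ} (hK : 1 ≤ K)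
    (S : Fin K → Matrix (Fin nb) (Fin nb) ℝ)
    (hS : ∀ k, (S k).PosSemidef)
    (hSsum : (∑ k, S k).PosDef)
    (T : Set (Fin K → ℝ))
    (hTne : T.Nonempty) (hTconv : Convex ℝ T) (hTcomp : IsCompact T)
    (hTnonneg : ∀ t ∈ T, ∀ k, 0 ≤ t k)
    (hTmono : ∀ t t' : Fin K → ℝ, (∀ k, 0 ≤ t k) → (∀ k, t k ≤ t' k) → t' ∈ T → t ∈ T)
    (hTpos : ∃ t ∈ T, ∀ k, 0 < t k)
    (Q : Matrix (Fin nb) (Fin nb) ℝ) (hQ : Q.IsSymm) (q : Fin nb → ℝ) :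
    IsGreatest
      {v : ℝ | ∃ V : Matrix (Fin nb) (Fin nb) ℝ, ∃ w : Fin nb → ℝ, ∃ t ∈ T,
        V.IsSymm ∧ (∀ k, (S k * V).trace ≤ t k) ∧
        (Matrix.fromBlocks V (Matrix.of fun i (_ : Unit) => w i)
          (Matrix.of fun (_ : Unit) j => w j)
          (Matrix.of fun _ _ => (1 : ℝ))).PosSemidef ∧
        v = (Q * V).trace + 2 * (q ⬝ᵥ w)}
      (sInf {v : ℝ | ∃ lam : Fin K → ℝ, ∃ μ : ℝ,
        (∀ k, 0 ≤ lam k) ∧ 0 ≤ μ ∧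
        (blockDiagOne (∑ k, lam k • S k) μ - qPlus Q q).PosSemidef ∧
        v = suppFn T lam + μ}) := by
  obtain ⟨t, ht⟩ := hTne
  exact stmt15_general (S := S) (fun k => (hS k).isHermitian)
    ⟨1, fun _ => zero_le_one, by simpa using hSsum⟩ hTconv hTcomp
    ⟨0, .zero, t, ht, by simpa using hTnonneg t ht⟩ hQ q
end
end
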